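/- arXiv:1702.08373 — 5 statements merged into one kernel-verified Lean document; each statement's English description precedes it below -/
import Mathlib

section
/- Let S and S' be probability measures on the same finite set Ω, and let G be a graph with vertex set W ⊆ Ω such that Pr_S(v) > 0 and Pr_{S'}(v) > 0 for all v ∈ W. Suppose 0 < ε₀ < 1/2 and δ > 0 are such that min{Pr_S(W), Pr_{S'}(W)} > 1 − ε₀, that G has diameter at most r < ∞, and that for every edge uv of G one has |log[ (Pr_{S'}(u)/Pr_{S'}(v)) / (Pr_S(u)/Pr_S(v)) ]| ≤ δ. Then for every v ∈ W, |log( Pr_{S'}(v) / Pr_S(v) )| ≤ rδ + 2ε₀. -/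
open Finset

lemma ratio_aux {Ω : Type*} [Fintype Ω] (S S' : Ω → ℝ) (hS0 : ∀ v, 0 ≤ S v)
    (hS1 : ∑ v, S v = 1) (W : Finset Ω) (hpos : ∀ v ∈ W, 0 < S v ∧ 0 < S' v)
    (ε c t : ℝ) (hε : 0 < ε) (hε' : ε < 1 / 2) (hW : 1 - ε < ∑ v ∈ W, S' v)
    (h : ∀ u ∈ W, Real.log (S' u) - Real.log (S u) ≤ t + c) : -(c + 2 * ε) ≤ t := by
  have h1 : ∑ u ∈ W, S' u ≤ ∑ u ∈ W, S u * Real.exp (t + c) := by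
    refine Finset.sum_le_sum fun u hu => ?_
    obtain ⟨a, b⟩ := hpos u hu
    rw [← Real.log_le_log_iff b (by positivity), Real.log_mul a.ne' (Real.exp_pos _).ne',
      Real.log_exp]
    linarith [h u hu]
  rw [← Finset.sum_mul] at h1
  have h2 : ∑ u ∈ W, S u ≤ 1 := by
    rw [← hS1]
    exact Finset.sum_le_sum_of_subset_of_nonneg (Finset.subset_univ _) fun i _ _ => hS0 i
  have h3 : 1 - ε < Real.exp (t + c) := by
    nlinarith [Real.exp_pos (t + c)]
  have h4 : Real.log (1 - ε) < t + c := (Real.log_lt_iff_lt_exp (by linarith)).2 h3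
  have h5 := Real.one_sub_inv_le_log_of_pos (show 0 < 1 - ε by linarith)
  have h6 : (1 - ε)⁻¹ ≤ 1 + 2 * ε := by
    rw [inv_le_iff_one_le_mul₀ (by linarith)]
    nlinarith
  linarith

/-- Ratios of probabilities propagate along paths of a graph of outcomes
(Lemma 2.1 of the paper, explicit-constant form). -/
theorem ratio_transfer {Ω : Type*} [Fintype Ω] [DecidableEq Ω]
    (S S' : Ω → ℝ) (hS0 : ∀ v, 0 ≤ S v) (hS'0 : ∀ v, 0 ≤ S' v)
    (hS1 : ∑ v, S v = 1) (hS'1 : ∑ v, S' v = 1)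
    (W : Finset Ω) (G : SimpleGraph Ω)
    (hGW : ∀ u v : Ω, G.Adj u v → u ∈ W ∧ v ∈ W)
    (hpos : ∀ v ∈ W, 0 < S v ∧ 0 < S' v)
    (ε₀ δ : ℝ) (hε₀ : 0 < ε₀) (hε₀' : ε₀ < 1 / 2) (hδ : 0 < δ)
    (hW : 1 - ε₀ < min (∑ v ∈ W, S v) (∑ v ∈ W, S' v))
    (r : ℕ)
    (hdiam : ∀ u ∈ W, ∀ v ∈ W, ∃ p : G.Walk u v, p.length ≤ r)
    (hedge : ∀ u v : Ω, G.Adj u v →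
      |Real.log ((S' u / S' v) / (S u / S v))| ≤ δ) :
    ∀ v ∈ W, |Real.log (S' v / S v)| ≤ r * δ + 2 * ε₀ := by
  have hdiff : ∀ u v : Ω, ∀ p : G.Walk u v,
      |(Real.log (S' u) - Real.log (S u)) - (Real.log (S' v) - Real.log (S v))|
        ≤ p.length * δ := by
    intro u v p
    induction p with
    | nil => simp
    | @cons a b c hab q ih =>
      have h := hedge a b hab
      obtain ⟨ha, hb⟩ := hGW a b hab
      obtain ⟨a1, a2⟩ := hpos a ha
      obtain ⟨b1, b2⟩ := hpos b hb
      rw [Real.log_div (by positivity) (by positivity), Real.log_div a2.ne' b2.ne',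
        Real.log_div a1.ne' b1.ne'] at h
      rw [SimpleGraph.Walk.length_cons]
      push_cast
      rw [abs_le] at h ih ⊢
      constructor <;> linarith [h.1, h.2, ih.1, ih.2]
  have hd : ∀ u ∈ W, ∀ v ∈ W,
      |(Real.log (S' u) - Real.log (S u)) - (Real.log (S' v) - Real.log (S v))| ≤ r * δ := by
    intro u hu v hv
    obtain ⟨p, hp⟩ := hdiam u hu v hv
    refine (hdiff u v p).trans ?_
    have : (p.length : ℝ) ≤ r := by exact_mod_cast hp
    gcongr
  intro v hv
  obtain ⟨a, b⟩ := hpos v hv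
  obtain ⟨w1, w2⟩ := lt_min_iff.1 hW
  rw [Real.log_div b.ne' a.ne']
  have k1 := ratio_aux S S' hS0 hS1 W hpos ε₀ (r * δ) (Real.log (S' v) - Real.log (S v))
    hε₀ hε₀' w2 (fun u hu => by linarith [(abs_le.1 (hd u hu v hv)).2])
  have k2 := ratio_aux S' S hS'0 hS'1 W (fun v hv => (hpos v hv).symm) ε₀ (r * δ)
    (Real.log (S v) - Real.log (S' v))
    hε₀ hε₀' w1 (fun u hu => by linarith [(abs_le.1 (hd u hu v hv)).1])
  rw [abs_le]
  constructor <;> linarith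
end

section
/- Let d = (d_1,…,d_n) be a graphical sequence with Σ_i d_i = dn and Δ = max_i d_i, and suppose dn > Δ(Δ+2). Then for all distinct a, v ∈ [n], the probability P_{av}(d) that av is an edge of a uniformly random simple graph on [n] with degree sequence d satisfies P_{av}(d) ≤ Δ² / ( dn · (1 − Δ(Δ+2)/(dn)) ). -/
open Finset

noncomputable section

/-- Simple graphs on vertex set `[n]`, encoded as finsets of non-diagonal unordered pairs. -/
def Graphs (n : ℕ) : Finset (Finset (Sym2 (Fin n))) :=
  Finset.univ.filter (fun E => ∀ e ∈ E, ¬ e.IsDiag)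

/-- Degree of vertex `i` in the graph `E`. -/
def deg {n : ℕ} (E : Finset (Sym2 (Fin n))) (i : Fin n) : ℕ :=
  (E.filter (fun e => i ∈ e)).card

/-- Number of simple graphs on `[n]` with degree sequence `D`. -/
def gcount (n : ℕ) (D : Fin n → ℕ) : ℕ :=
  ((Graphs n).filter (fun E => ∀ i, deg E i = D i)).card

/-- Probability that the edge `av` is present in a uniformly random simple graph on `[n]`
with degree sequence `D`. -/
def Pedge (n : ℕ) (D : Fin n → ℕ) (a v : Fin n) : ℝ :=
  (((Graphs n).filter (fun E => s(a, v) ∈ E ∧ ∀ i, deg E i = D i)).card : ℝ) /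
    (gcount n D : ℝ)

def nb {n : ℕ} (E : Finset (Sym2 (Fin n))) (i : Fin n) : Finset (Fin n) :=
  Finset.univ.filter (fun x => s(i, x) ∈ E)

lemma card_nb {n : ℕ} (E : Finset (Sym2 (Fin n))) (i : Fin n) :
    (nb E i).card = deg E i := by
  unfold nb deg
  apply Finset.card_bij (fun x _ => s(i, x))
  · intro x hx
    simpa using hx
  · intro x _ y _ h
    simp at h; grind
  · intro e he
    simp only [Finset.mem_filter] at he
    obtain ⟨he, hi⟩ := he
    obtain ⟨x, rfl⟩ := hi
    exact ⟨x, by simpa using he, rfl⟩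

lemma card_pairs {n : ℕ} (E : Finset (Sym2 (Fin n))) (X : Finset (Fin n)) :
    ((Finset.univ : Finset (Fin n × Fin n)).filter (fun p => p.1 ∈ X ∧ s(p.1, p.2) ∈ E)).card
      = ∑ x ∈ X, deg E x := by
  simp only [← card_nb]
  rw [← Finset.card_sigma]
  apply Finset.card_bij (fun p _ => (⟨p.1, p.2⟩ : Σ _ : Fin n, Fin n))
  · intro p hp
    simpa [nb] using hp
  · rintro ⟨x, y⟩ _ ⟨z, w⟩ _ h
    simpa using h
  · rintro ⟨x, y⟩ h
    exact ⟨(x, y), by simpa [nb] using h, rfl⟩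

lemma card_pairs' {n : ℕ} (E : Finset (Sym2 (Fin n))) (X : Finset (Fin n)) :
    ((Finset.univ : Finset (Fin n × Fin n)).filter (fun p => p.2 ∈ X ∧ s(p.1, p.2) ∈ E)).card
      = ∑ x ∈ X, deg E x := by
  rw [← card_pairs]
  apply Finset.card_bij (fun p _ => p.swap)
  · intro p hp
    simpa [Sym2.eq_swap] using hp
  · rintro ⟨x, y⟩ _ ⟨z, w⟩ _ h
    simpa [and_comm] using h
  · rintro ⟨x, y⟩ h
    exact ⟨(y, x), by simpa [Sym2.eq_swap] using h, rfl⟩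

def good {n : ℕ} (a v : Fin n) (E : Finset (Sym2 (Fin n))) : Finset (Fin n × Fin n) :=
  Finset.univ.filter (fun p => s(p.1, p.2) ∈ E ∧ p.1 ≠ a ∧ s(a, p.1) ∉ E ∧ p.2 ≠ v ∧
    s(v, p.2) ∉ E)

lemma good_card {n : ℕ} (a v : Fin n) (E : Finset (Sym2 (Fin n))) (K : ℕ)
    (hK : ∀ i, deg E i ≤ K) :
    ∑ i, deg E i ≤ (good a v E).card + 2 * (K * (K + 1)) := by
  have key : ∀ b, ∑ x ∈ insert b (nb E b), deg E x ≤ K * (K + 1) := by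
    intro b
    calc _ ≤ (insert b (nb E b)).card • K := Finset.sum_le_card_nsmul _ _ _ (fun x _ => hK x)
      _ ≤ (K + 1) * K := by
        rw [smul_eq_mul]
        refine Nat.mul_le_mul_right _ ((Finset.card_insert_le _ _).trans ?_)
        rw [card_nb]
        exact Nat.succ_le_succ (hK b)
      _ = _ := by ring
  have h1 := key a
  have h2 := key v
  rw [← card_pairs] at h1 ⊢
  rw [← card_pairs'] at h2
  refine (Finset.card_le_card (t := (good a v E ∪ _) ∪ _) ?_).trans
    ((Finset.card_union_le _ _).trans
      (le_trans (Nat.add_le_add ((Finset.card_union_le _ _).trans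
        (Nat.add_le_add_left h1 _)) h2) (by omega)))
  rintro ⟨x, y⟩ h
  simp only [good, nb, Finset.mem_union, Finset.mem_filter, Finset.mem_univ, true_and,
    Finset.mem_insert] at h ⊢
  tauto

lemma deg_sdiff_union {n : ℕ} (E : Finset (Sym2 (Fin n))) (a v x y i : Fin n)
    (hE : ∀ e ∈ E, ¬ e.IsDiag) (hav : a ≠ v)
    (h1 : s(a, v) ∈ E) (h2 : s(x, y) ∈ E) (hxa : x ≠ a) (h3 : s(a, x) ∉ E) (hyv : y ≠ v)
    (h4 : s(v, y) ∉ E) :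
    deg ((E \ {s(a, v), s(x, y)}) ∪ {s(a, x), s(v, y)}) i = deg E i := by
  have hxy : x ≠ y := by simpa using hE _ h2
  have hxv : x ≠ v := by rintro rfl; exact h4 h2
  have hya : y ≠ a := by rintro rfl; rw [Sym2.eq_swap] at h2; exact h3 h2
  have hd : ∀ F : Finset (Sym2 (Fin n)), deg F i = ∑ e ∈ F, if i ∈ e then 1 else 0 := by
    intro F; simp [deg]
  have hs : ({s(a, v), s(x, y)} : Finset (Sym2 (Fin n))) ⊆ E := by
    intro e he
    simp only [Finset.mem_insert, Finset.mem_singleton] at he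
    rcases he with rfl | rfl <;> assumption
  have hdis : Disjoint (E \ {s(a, v), s(x, y)}) {s(a, x), s(v, y)} := by
    rw [Finset.disjoint_right]
    intro e he he'
    simp only [Finset.mem_insert, Finset.mem_singleton] at he
    have := (Finset.mem_sdiff.1 he').1
    rcases he with rfl | rfl <;> contradiction
  have n1 : s(a, v) ≠ s(x, y) := by
    simp only [ne_eq, Sym2.eq_iff]; tauto
  have n2 : s(a, x) ≠ s(v, y) := by
    simp only [ne_eq, Sym2.eq_iff]; tauto
  rw [hd, hd, Finset.sum_union hdis, ← Finset.sum_sdiff hs, Finset.sum_pair n1, Finset.sum_pair n2]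
  congr 1
  simp only [Sym2.mem_iff]
  split_ifs <;> grind

lemma switch_inv {n : ℕ} (E : Finset (Sym2 (Fin n))) (a v x y : Fin n) 
    (h1 : s(a, v) ∈ E) (h2 : s(x, y) ∈ E) (h3 : s(a, x) ∉ E) (h4 : s(v, y) ∉ E) :
    (((E \ {s(a, v), s(x, y)}) ∪ {s(a, x), s(v, y)}) \ {s(a, x), s(v, y)}) ∪
      {s(a, v), s(x, y)} = E := by
  generalize s(a, v) = p at *
  generalize s(x, y) = q at *
  generalize s(a, x) = r at *
  generalize s(v, y) = t at *
  ext e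
  simp only [Finset.mem_union, Finset.mem_sdiff, Finset.mem_insert, Finset.mem_singleton]
  grind

lemma switch_count (n : ℕ) (D : Fin n → ℕ) (a v : Fin n) (hav : a ≠ v) :
    ∑ E ∈ (Graphs n).filter (fun E => s(a, v) ∈ E ∧ ∀ i, deg E i = D i), (good a v E).card ≤
    ((Graphs n).filter (fun E => s(a, v) ∉ E ∧ ∀ i, deg E i = D i)).card * (D a * D v) := by
  have : ((Graphs n).filter (fun E => s(a, v) ∉ E ∧ ∀ i, deg E i = D i)).card * (D a * D v) =
    ∑ E ∈ (Graphs n).filter (fun E => s(a, v) ∉ E ∧ ∀ i, deg E i = D i),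
      (nb E a ×ˢ nb E v).card := by
    rw [Finset.card_eq_sum_ones, Finset.sum_mul]
    apply Finset.sum_congr rfl
    intro E hE
    have := (Finset.mem_filter.1 hE).2.2
    rw [Finset.card_product, card_nb, card_nb, this, this, one_mul]
  rw [this, ← Finset.card_sigma, ← Finset.card_sigma]
  apply Finset.card_le_card_of_injOn (fun t =>
    (⟨(t.1 \ {s(a, v), s(t.2.1, t.2.2)}) ∪ {s(a, t.2.1), s(v, t.2.2)}, t.2⟩ :
      Σ _ : Finset (Sym2 (Fin n)), Fin n × Fin n))
  · rintro ⟨E, x, y⟩ h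
    simp only [Finset.mem_coe, Finset.mem_sigma, Finset.mem_filter, Graphs, good,
      Finset.mem_univ, true_and, Finset.mem_product, nb] at h ⊢
    obtain ⟨⟨hE, h1, hD⟩, h2, hxa, h3, hyv, h4⟩ := h
    have hxv : x ≠ v := by rintro rfl; exact h4 h2
    have hya : y ≠ a := by rintro rfl; rw [Sym2.eq_swap] at h2; exact h3 h2
    refine ⟨⟨?_, ?_, ?_⟩, ?_, ?_⟩
    · intro e he
      simp only [Finset.mem_union, Finset.mem_sdiff, Finset.mem_insert,
        Finset.mem_singleton] at he
      rcases he with he | rfl | rfl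
      · exact hE _ he.1
      · simpa using hxa.symm
      · simpa using hyv.symm
    · simp only [Finset.mem_union, Finset.mem_sdiff, Finset.mem_insert,
        Finset.mem_singleton, Sym2.eq_iff]
      tauto
    · intro i
      rw [deg_sdiff_union E a v x y i hE hav h1 h2 hxa h3 hyv h4, hD]
    · simp
    · simp
  · rintro ⟨E, x, y⟩ h ⟨E', x', y'⟩ h' heq
    simp only [Finset.mem_coe, Finset.mem_sigma, Finset.mem_filter, Graphs, good,
      Finset.mem_univ, true_and] at h h'
    simp only [Sigma.mk.injEq, heq_eq_eq, Prod.mk.injEq] at heq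
    obtain ⟨he, rfl, rfl⟩ := heq
    have i1 := switch_inv E a v x y h.1.2.1 h.2.1 h.2.2.2.1 h.2.2.2.2.2
    have i2 := switch_inv E' a v x y h'.1.2.1 h'.2.1 h'.2.2.2.1 h'.2.2.2.2.2
    rw [he, i2] at i1
    rw [i1]

/-- Switching bound on the edge probability (Lemma 2.3). -/
theorem edge_probability_switching_bound (n : ℕ) (D : Fin n → ℕ)
    (hgr : 0 < gcount n D)
    (hcond : ((Finset.univ.sup D : ℕ) : ℝ) * ((Finset.univ.sup D : ℕ) + 2) < (∑ i, (D i : ℝ)))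
    (a v : Fin n) (hav : a ≠ v) :
    Pedge n D a v ≤
      ((Finset.univ.sup D : ℕ) : ℝ) ^ 2 /
        ((∑ i, (D i : ℝ)) *
          (1 - ((Finset.univ.sup D : ℕ) : ℝ) * ((Finset.univ.sup D : ℕ) + 2) /
            (∑ i, (D i : ℝ)))) := by
  set K := Finset.univ.sup D with hKdef
  have hK : ∀ i, D i ≤ K := fun i => Finset.le_sup (Finset.mem_univ i)
  set A := (Graphs n).filter (fun E => s(a, v) ∈ E ∧ ∀ i, deg E i = D i) with hA
  set B := (Graphs n).filter (fun E => s(a, v) ∉ E ∧ ∀ i, deg E i = D i) with hB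
  have hsum : gcount n D = A.card + B.card := by
    unfold gcount
    rw [← Finset.card_filter_add_card_filter_not (fun E => s(a, v) ∈ E), Finset.filter_filter,
      Finset.filter_filter]
    simp only [hA, hB, and_comm]
  have h1 : A.card * ∑ i, D i ≤ B.card * (K * K) + A.card * (2 * (K * (K + 1))) := by
    calc A.card * ∑ i, D i = ∑ E ∈ A, ∑ i, D i := by simp
      _ ≤ ∑ E ∈ A, ((good a v E).card + 2 * (K * (K + 1))) := by
        apply Finset.sum_le_sum
        intro E hE
        have hd := (Finset.mem_filter.1 hE).2.2
        have := good_card a v E K (fun i => by rw [hd]; exact hK i)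
        simpa only [hd] using this
      _ = (∑ E ∈ A, (good a v E).card) + A.card * (2 * (K * (K + 1))) := by
        rw [Finset.sum_add_distrib]; simp
      _ ≤ _ := by
        gcongr
        exact (switch_count n D a v hav).trans
          (Nat.mul_le_mul_left _ (Nat.mul_le_mul (hK a) (hK v)))
  have h2 : (A.card : ℝ) * ∑ i, (D i : ℝ) ≤
      B.card * ((K : ℝ) * K) + A.card * (2 * (K * (K + 1))) := by exact_mod_cast h1
  have hM : (0 : ℝ) < ∑ i, (D i : ℝ) := lt_of_le_of_lt (by positivity) hcond
  have hden : (∑ i, (D i : ℝ)) * (1 - (K : ℝ) * (K + 2) / ∑ i, (D i : ℝ)) =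
      (∑ i, (D i : ℝ)) - K * (K + 2) := by
    field_simp
  have hg : (0 : ℝ) < gcount n D := by exact_mod_cast hgr
  rw [hden, Pedge, div_le_div_iff₀ hg (by linarith), hsum]
  push_cast
  nlinarith [h2]
end
end

section
/- Let n be an integer, A ⊆ C([n],2), d a sequence of nonnegative integers of length n, and a, v ∈ [n] with {a,v} ∈ A. If N_{av}(d) > 0, then P_{av}(d) = d_v · ( Σ_{b ∈ A*(v)} R_{ba}(d − e_v) · (1 − P_{bv}(d − e_b − e_v)) / (1 − P_{av}(d − e_a − e_v)) )^{−1}, where A*(v) = {b ∈ A(v) : N_{bv}(d) > 0}; in particular all quantities appearing on the right-hand side are well defined and the summation is nonzero. -/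
open Finset

noncomputable section

/-- `N(D)`: the number of graphs realising the (integer) degree sequence `D` over the set `A`
of allowable pairs. -/
def NA (n : ℕ) (A : Finset (Sym2 (Fin n))) (D : Fin n → ℤ) : ℕ :=
  ((Graphs n).filter (fun E => E ⊆ A ∧ ∀ i, (deg E i : ℤ) = D i)).card

/-- `N_F(D)`: the number of graphs realising `D` over `A` that contain all edges of `F`. -/
def NAE (n : ℕ) (A : Finset (Sym2 (Fin n))) (F : Finset (Sym2 (Fin n))) (D : Fin n → ℤ) : ℕ :=
  ((Graphs n).filter (fun E => E ⊆ A ∧ F ⊆ E ∧ ∀ i, (deg E i : ℤ) = D i)).card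

/-- `P_F(D) = N_F(D)/N(D)`: the probability that a uniformly random graph realising `D`
over `A` contains all edges of `F`. -/
def PA (n : ℕ) (A : Finset (Sym2 (Fin n))) (F : Finset (Sym2 (Fin n))) (D : Fin n → ℤ) : ℝ :=
  (NAE n A F D : ℝ) / (NA n A D : ℝ)

/-- The `a`-th standard unit vector. -/
def eV {n : ℕ} (a : Fin n) : Fin n → ℤ := fun i => if i = a then 1 else 0

/-- `A(v)`: the allowable neighbourhood of `v`. -/
def nbhd (n : ℕ) (A : Finset (Sym2 (Fin n))) (v : Fin n) : Finset (Fin n) :=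
  Finset.univ.filter (fun u => s(v, u) ∈ A)

/-- `R_{ab}(D) = N(D - e_a)/N(D - e_b)`. -/
def RA (n : ℕ) (A : Finset (Sym2 (Fin n))) (a b : Fin n) (D : Fin n → ℤ) : ℝ :=
  (NA n A (D - eV a) : ℝ) / (NA n A (D - eV b) : ℝ)

theorem NAE_eq_sum (n : ℕ) (A : Finset (Sym2 (Fin n))) (e : Sym2 (Fin n)) (D : Fin n → ℤ) :
    NAE n A {e} D = ∑ E ∈ (Graphs n).filter (fun E => E ⊆ A ∧ ∀ i, (deg E i : ℤ) = D i),
      if e ∈ E then 1 else 0 := by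
  rw [← Finset.card_filter, Finset.filter_filter]
  unfold NAE
  congr 1
  ext E
  simp only [Finset.mem_filter, Finset.singleton_subset_iff]
  tauto

theorem deg_eq_card (n : ℕ) (A : Finset (Sym2 (Fin n))) (E : Finset (Sym2 (Fin n))) (hE : E ⊆ A)
    (v : Fin n) :
    ((nbhd n A v).filter (fun b => s(b, v) ∈ E)).card = deg E v := by
  unfold deg
  apply Finset.card_bij (fun b _ => s(b, v))
  · intro b hb
    simp only [Finset.mem_filter] at hb ⊢
    exact ⟨hb.2, by simp⟩
  · intro b _ c _ h
    exact Sym2.congr_left.mp h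
  · intro e he
    simp only [Finset.mem_filter] at he
    obtain ⟨b, rfl⟩ := Sym2.mem_iff_exists.mp he.2
    refine ⟨b, ?_, Sym2.eq_swap⟩
    simp only [Finset.mem_filter, nbhd, Finset.mem_univ, true_and]
    refine ⟨hE he.1, ?_⟩
    rw [Sym2.eq_swap]
    exact he.1

theorem sum_NAE (n : ℕ) (A : Finset (Sym2 (Fin n))) (D : Fin n → ℤ) (v : Fin n) :
    ((∑ b ∈ nbhd n A v, NAE n A {s(b, v)} D : ℕ) : ℤ) = D v * (NA n A D : ℤ) := by
  simp_rw [NAE_eq_sum]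
  rw [Finset.sum_comm]
  simp_rw [← Finset.card_filter]
  push_cast
  rw [Finset.sum_congr rfl (g := fun _ => D v)]
  · simp [NA, mul_comm]
  · intro E hE
    simp only [Finset.mem_filter] at hE
    rw [deg_eq_card n A E hE.2.1]
    exact hE.2.2 v

theorem deg_insert' {n : ℕ} (E : Finset (Sym2 (Fin n))) (b v : Fin n) (hbv : b ≠ v)
    (h : s(b, v) ∉ E) (i : Fin n) :
    (deg (insert s(b, v) E) i : ℤ) = deg E i + eV b i + eV v i := by
  unfold deg eV
  rw [Finset.filter_insert]
  by_cases hb : i = b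
  · subst hb
    simp [hbv, h]
  · by_cases hv : i = v
    · subst hv
      simp [hb, h]
    · simp [hb, hv]

theorem switch (n : ℕ) (A : Finset (Sym2 (Fin n))) (D : Fin n → ℤ)
    (b v : Fin n) (hbA : s(b, v) ∈ A) (hbv : b ≠ v) :
    NAE n A {s(b, v)} D + NAE n A {s(b, v)} (D - eV b - eV v) = NA n A (D - eV b - eV v) := by
  have h1 : NAE n A {s(b, v)} D = (((Graphs n).filter
      (fun E => E ⊆ A ∧ ∀ i, (deg E i : ℤ) = (D - eV b - eV v) i)).filter
        (fun E => ¬ s(b, v) ∈ E)).card := by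
    unfold NAE
    refine Finset.card_bij' (fun E _ => E.erase s(b, v)) (fun E _ => insert s(b, v) E) ?_ ?_ ?_ ?_
    · intro E hE
      simp only [Finset.mem_filter, Graphs, Finset.mem_univ, true_and,
        Finset.singleton_subset_iff] at hE ⊢
      obtain ⟨hg, hs, hm, hd⟩ := hE
      refine ⟨⟨fun e he => hg e (Finset.mem_of_mem_erase he),
        (Finset.erase_subset _ _).trans hs, fun i => ?_⟩, by simp⟩
      have := deg_insert' (E.erase s(b, v)) b v hbv (by simp) i
      rw [Finset.insert_erase hm, hd i] at this
      simp only [Pi.sub_apply]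
      omega
    · intro E hE
      simp only [Finset.mem_filter, Graphs, Finset.mem_univ, true_and,
        Finset.singleton_subset_iff] at hE ⊢
      obtain ⟨⟨hg, hs, hd⟩, hm⟩ := hE
      refine ⟨?_, Finset.insert_subset hbA hs, by simp, fun i => ?_⟩
      · intro e he
        rcases Finset.mem_insert.mp he with rfl | he
        · simpa using hbv
        · exact hg e he
      · rw [deg_insert' E b v hbv hm i, hd i]
        simp only [Pi.sub_apply]
        omega
    · intro E hE
      simp only [Finset.mem_filter, Finset.singleton_subset_iff] at hE
      exact Finset.insert_erase hE.2.2.1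
    · intro E hE
      simp only [Finset.mem_filter] at hE
      exact Finset.erase_insert hE.2
  rw [h1, NAE_eq_sum, ← Finset.card_filter, add_comm]
  exact Finset.card_filter_add_card_filter_not _

theorem switch_real (n : ℕ) (A : Finset (Sym2 (Fin n))) (D : Fin n → ℤ)
    (b v : Fin n) (hbA : s(b, v) ∈ A) (hbv : b ≠ v) :
    (NA n A (D - eV b - eV v) : ℝ) * (1 - PA n A {s(b, v)} (D - eV b - eV v))
      = NAE n A {s(b, v)} D := by
  have h := switch n A D b v hbA hbv
  unfold PA
  by_cases h0 : NA n A (D - eV b - eV v) = 0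
  · have : NAE n A {s(b, v)} D = 0 := by omega
    simp [h0, this]
  · have h0' : (NA n A (D - eV b - eV v) : ℝ) ≠ 0 := by exact_mod_cast h0
    have h' : (NAE n A {s(b, v)} D : ℝ) + NAE n A {s(b, v)} (D - eV b - eV v)
      = NA n A (D - eV b - eV v) := by exact_mod_cast h
    field_simp
    linarith

/-- Recursive formula for the edge probability `P_{av}` (Proposition 3.1(a)). -/
theorem edge_probability_recursion (n : ℕ) (A : Finset (Sym2 (Fin n)))
    (hA : ∀ e ∈ A, ¬ e.IsDiag) (D : Fin n → ℤ) (hD : ∀ i, 0 ≤ D i)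
    (a v : Fin n) (hav : s(a, v) ∈ A)
    (hpos : 0 < NAE n A {s(a, v)} D) :
    (∑ b ∈ (nbhd n A v).filter (fun b => 0 < NAE n A {s(b, v)} D),
        RA n A b a (D - eV v) *
          ((1 - PA n A {s(b, v)} (D - eV b - eV v)) /
            (1 - PA n A {s(a, v)} (D - eV a - eV v)))) ≠ 0 ∧
      PA n A {s(a, v)} D =
        (D v : ℝ) *
          (∑ b ∈ (nbhd n A v).filter (fun b => 0 < NAE n A {s(b, v)} D),
            RA n A b a (D - eV v) *
              ((1 - PA n A {s(b, v)} (D - eV b - eV v)) /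
                (1 - PA n A {s(a, v)} (D - eV a - eV v))))⁻¹ := by
  have hne : ∀ b, s(b, v) ∈ A → b ≠ v := fun b hb h => hA _ hb (by simpa using h)
  have hS : (∑ b ∈ (nbhd n A v).filter (fun b => 0 < NAE n A {s(b, v)} D),
        RA n A b a (D - eV v) *
          ((1 - PA n A {s(b, v)} (D - eV b - eV v)) /
            (1 - PA n A {s(a, v)} (D - eV a - eV v))))
      = (D v : ℝ) * NA n A D / NAE n A {s(a, v)} D := by
    have h1 : ∀ b ∈ (nbhd n A v).filter (fun b => 0 < NAE n A {s(b, v)} D),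
        RA n A b a (D - eV v) *
          ((1 - PA n A {s(b, v)} (D - eV b - eV v)) /
            (1 - PA n A {s(a, v)} (D - eV a - eV v)))
        = (NAE n A {s(b, v)} D : ℝ) / NAE n A {s(a, v)} D := by
      intro b hb
      simp only [Finset.mem_filter, nbhd, Finset.mem_univ, true_and] at hb
      have hbA : s(b, v) ∈ A := by
        rw [Sym2.eq_swap]
        exact hb.1
      rw [← switch_real n A D b v hbA (hne b hbA), ← switch_real n A D a v hav (hne a hav)]
      unfold RA
      rw [sub_right_comm D (eV v) (eV b), sub_right_comm D (eV v) (eV a), div_mul_div_comm]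
    rw [Finset.sum_congr rfl h1, ← Finset.sum_div]
    congr 1
    rw [Finset.sum_filter_of_ne]
    · have := sum_NAE n A D v
      exact_mod_cast congrArg (Int.cast : ℤ → ℝ) this
    · intro b _ hb
      exact Nat.pos_of_ne_zero (by exact_mod_cast hb)
  have hNE : (NAE n A {s(a, v)} D : ℝ) ≠ 0 := by exact_mod_cast hpos.ne'
  have hle : 0 < ∑ b ∈ nbhd n A v, NAE n A {s(b, v)} D := by
    apply Finset.sum_pos' (fun _ _ => Nat.zero_le _)
    refine ⟨a, ?_, hpos⟩
    simp only [nbhd, Finset.mem_filter, Finset.mem_univ, true_and]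
    rw [Sym2.eq_swap]
    exact hav
  have hz : D v * (NA n A D : ℤ) ≠ 0 := by
    rw [← sum_NAE]
    exact_mod_cast hle.ne'
  have hDv : (D v : ℝ) ≠ 0 := by exact_mod_cast left_ne_zero_of_mul hz
  have hN : (NA n A D : ℝ) ≠ 0 := by exact_mod_cast right_ne_zero_of_mul hz
  rw [hS]
  refine ⟨div_ne_zero (mul_ne_zero hDv hN) hNE, ?_⟩
  unfold PA
  field_simp
end
end

section
/- Let n be an integer, A ⊆ C([n],2), and a, v, b ∈ [n] with a ≠ b and {a,v}, {b,v} ∈ A. Let k₀ ≥ 1 be an integer and d a sequence of nonnegative integers of length n, and assume 0 < N_{av}(d − k(e_a + e_v)) < N(d − k(e_a + e_v)) for all 0 ≤ k ≤ k₀. Define Σ^{k₀} = Σ_{k=1}^{k₀} (−1)^{k−1} P_{bv}(d − k(e_a + e_v)) · Π_{j=1}^{k−1} [ P_{av}(d − j(e_a + e_v)) / (1 − P_{av}(d − (j+1)(e_a + e_v))) ] and T = [ P_{av}(d) / (1 − P_{av}(d − e_a − e_v)) ] · Σ^{k₀}. Then: if N_{{av,bv}}(d − k₀(e_a + e_v))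 = 0 then P_{avb}(d) = T; otherwise P_{avb}(d) ≤ T when k₀ is odd, and P_{avb}(d) ≥ T when k₀ is even. -/
open Finset

noncomputable section

lemma deg_erase_aux {n : ℕ} (E : Finset (Sym2 (Fin n))) (a v : Fin n) (hav : a ≠ v)
    (h : s(a, v) ∈ E) (i : Fin n) :
    (deg (E.erase s(a, v)) i : ℤ) = (deg E i : ℤ) - (eV a + eV v) i := by
  unfold deg
  rw [Finset.filter_erase]
  by_cases hi : i = a ∨ i = v
  · have hm : s(a, v) ∈ E.filter (fun e => i ∈ e) := by
      simp [h, hi]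
    have h1 := Finset.card_erase_add_one hm
    have h2 : (eV a + eV v) i = 1 := by
      rcases hi with rfl | rfl
      · simp [eV, hav]
      · simp [eV, hav.symm]
    rw [h2]; omega
  · have hm : s(a, v) ∉ E.filter (fun e => i ∈ e) := by
      simp [hi]
    have h2 : (eV a + eV v) i = 0 := by
      push Not at hi
      simp [eV, hi.1, hi.2]
    rw [Finset.erase_eq_of_notMem hm, h2]; simp

lemma NAE_rec (n : ℕ) (A : Finset (Sym2 (Fin n))) (F : Finset (Sym2 (Fin n)))
    (a v : Fin n) (hav : a ≠ v) (h : s(a, v) ∈ A) (hF : s(a, v) ∉ F) (D : Fin n → ℤ) :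
    NAE n A (insert s(a, v) F) D + NAE n A (insert s(a, v) F) (D - (eV a + eV v))
      = NAE n A F (D - (eV a + eV v)) := by
  have key : NAE n A (insert s(a, v) F) D =
      ((Graphs n).filter (fun E => (E ⊆ A ∧ F ⊆ E ∧
        ∀ i, (deg E i : ℤ) = (D - (eV a + eV v)) i) ∧ s(a, v) ∉ E)).card := by
    unfold NAE
    refine Finset.card_bij' (fun E _ => E.erase s(a, v)) (fun E _ => insert s(a, v) E)
      ?_ ?_ ?_ ?_
    · intro E hE
      simp only [Graphs, Finset.mem_filter, Finset.mem_univ, true_and,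
        Finset.insert_subset_iff] at hE ⊢
      obtain ⟨h1, h2, ⟨h3, h4⟩, h5⟩ := hE
      refine ⟨fun e he => h1 e (Finset.mem_of_mem_erase he),
        ⟨(Finset.erase_subset _ _).trans h2, Finset.subset_erase.2 ⟨h4, hF⟩, fun i => ?_⟩,
        Finset.notMem_erase _ _⟩
      rw [deg_erase_aux E a v hav h3, h5]; rfl
    · intro E hE
      simp only [Graphs, Finset.mem_filter, Finset.mem_univ, true_and] at hE ⊢
      obtain ⟨h1, ⟨h2, h3, h4⟩, h5⟩ := hE
      refine ⟨fun e he => ?_, Finset.insert_subset h h2, Finset.insert_subset_insert _ h3,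
        fun i => ?_⟩
      · rcases Finset.mem_insert.1 he with rfl | he
        · simpa using hav
        · exact h1 e he
      · have := deg_erase_aux (insert s(a, v) E) a v hav (Finset.mem_insert_self _ _) i
        rw [Finset.erase_insert h5, h4] at this
        simp only [Pi.sub_apply] at this
        linarith
    · intro E hE
      simp only [Graphs, Finset.mem_filter, Finset.mem_univ, true_and,
        Finset.insert_subset_iff] at hE
      exact Finset.insert_erase hE.2.2.1.1
    · intro E hE
      simp only [Graphs, Finset.mem_filter, Finset.mem_univ, true_and] at hE
      exact Finset.erase_insert hE.2.2
  rw [key]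
  unfold NAE
  rw [add_comm, ← Finset.card_filter_add_card_filter_not (s := (Graphs n).filter (fun E =>
    E ⊆ A ∧ F ⊆ E ∧ ∀ i, (deg E i : ℤ) = (D - (eV a + eV v)) i)) (fun E => s(a, v) ∈ E),
    Finset.filter_filter, Finset.filter_filter]
  congr 2
  ext E
  simp only [Finset.mem_filter, Finset.insert_subset_iff]
  tauto

lemma NAE_empty (n : ℕ) (A : Finset (Sym2 (Fin n))) (D : Fin n → ℤ) :
    NAE n A ∅ D = NA n A D := by
  simp [NAE, NA]

lemma alt_expand (c β r : ℕ → ℝ) (k₀ : ℕ)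
    (h : ∀ k < k₀, c k = r k * (β (k + 1) - c (k + 1))) :
    ∀ m, m + 1 ≤ k₀ → c 0 = r 0 * (∑ k ∈ Finset.Icc 1 (m + 1),
      (-1 : ℝ) ^ (k - 1) * β k * ∏ j ∈ Finset.Icc 1 (k - 1), r j) +
      (-1 : ℝ) ^ (m + 1) * (r 0 * ∏ j ∈ Finset.Icc 1 m, r j) * c (m + 1) := by
  intro m
  induction m with
  | zero => intro hm; rw [h 0 (by omega)]; simp; ring
  | succ m ih =>
    intro hm
    rw [ih (by omega), Finset.sum_Icc_succ_top (by omega : 1 ≤ m + 1 + 1),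
      h (m + 1) (by omega), Nat.add_sub_cancel, Finset.prod_Icc_succ_top (by omega : 1 ≤ m + 1)]
    ring

/-- Alternating truncated expansion of the path probability `P_{avb}` (Lemma 3.2). -/
theorem path_probability_expansion (n : ℕ) (A : Finset (Sym2 (Fin n)))
    (hA : ∀ e ∈ A, ¬ e.IsDiag) (a v b : Fin n) (hab : a ≠ b)
    (hav : s(a, v) ∈ A) (hbv : s(b, v) ∈ A)
    (k₀ : ℕ) (hk₀ : 1 ≤ k₀) (D : Fin n → ℤ) (hD : ∀ i, 0 ≤ D i)
    (hN : ∀ k : ℕ, k ≤ k₀ →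
      0 < NAE n A {s(a, v)} (D - (k : ℤ) • (eV a + eV v)) ∧
        NAE n A {s(a, v)} (D - (k : ℤ) • (eV a + eV v)) <
          NA n A (D - (k : ℤ) • (eV a + eV v))) :
    let Sk : ℝ := ∑ k ∈ Finset.Icc 1 k₀,
      (-1 : ℝ) ^ (k - 1) * PA n A {s(b, v)} (D - (k : ℤ) • (eV a + eV v)) *
        ∏ j ∈ Finset.Icc 1 (k - 1),
          PA n A {s(a, v)} (D - (j : ℤ) • (eV a + eV v)) /
            (1 - PA n A {s(a, v)} (D - ((j : ℤ) + 1) • (eV a + eV v)))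
    let T : ℝ :=
      PA n A {s(a, v)} D / (1 - PA n A {s(a, v)} (D - eV a - eV v)) * Sk
    (NAE n A {s(a, v), s(b, v)} (D - (k₀ : ℤ) • (eV a + eV v)) = 0 →
        PA n A {s(a, v), s(b, v)} D = T) ∧
      (NAE n A {s(a, v), s(b, v)} (D - (k₀ : ℤ) • (eV a + eV v)) ≠ 0 →
        (Odd k₀ → PA n A {s(a, v), s(b, v)} D ≤ T) ∧
          (Even k₀ → T ≤ PA n A {s(a, v), s(b, v)} D)) := by
  intro Sk T
  have hne : a ≠ v := by simpa using hA _ hav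
  have hF : s(a, v) ∉ ({s(b, v)} : Finset (Sym2 (Fin n))) := by
    simp [hab, hne]
  set Dk : ℕ → Fin n → ℤ := fun k => D - (k : ℤ) • (eV a + eV v) with hDk
  have hstep : ∀ k, Dk k - (eV a + eV v) = Dk (k + 1) := by
    intro k; simp only [hDk]; push_cast; rw [add_smul, one_smul]; abel
  have h0 : Dk 0 = D := by simp [hDk]
  have h1 : Dk 1 = D - eV a - eV v := by simp [hDk]; abel
  have rM : ∀ k, (NAE n A {s(a, v)} (Dk k) : ℝ) + NAE n A {s(a, v)} (Dk (k + 1))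
      = NA n A (Dk (k + 1)) := by
    intro k
    have := NAE_rec n A ∅ a v hne hav (by simp) (Dk k)
    rw [hstep, NAE_empty] at this
    exact_mod_cast this
  have rC : ∀ k, (NAE n A {s(a, v), s(b, v)} (Dk k) : ℝ)
      + NAE n A {s(a, v), s(b, v)} (Dk (k + 1)) = NAE n A {s(b, v)} (Dk (k + 1)) := by
    intro k
    have := NAE_rec n A {s(b, v)} a v hne hav hF (Dk k)
    rw [hstep] at this
    exact_mod_cast this
  have hM : ∀ k ≤ k₀, (0 : ℝ) < NAE n A {s(a, v)} (Dk k) := fun k hk => by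
    exact_mod_cast (hN k hk).1
  have hNp : ∀ k ≤ k₀, (0 : ℝ) < NA n A (Dk k) := fun k hk => by
    exact_mod_cast (hN k hk).1.trans (hN k hk).2
  let r : ℕ → ℝ := fun k => PA n A {s(a, v)} (Dk k) / (1 - PA n A {s(a, v)} (Dk (k + 1)))
  have hr : ∀ k < k₀, r k = NA n A (Dk (k + 1)) / NA n A (Dk k) := by
    intro k hk
    have e1 := hNp k (by omega)
    have e2 := hNp (k + 1) (by omega)
    have e3 := hM k (by omega)
    have e4 : 1 - PA n A {s(a, v)} (Dk (k + 1)) =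
        NAE n A {s(a, v)} (Dk k) / NA n A (Dk (k + 1)) := by
      unfold PA
      rw [eq_div_iff e2.ne', sub_mul, div_mul_cancel₀ _ e2.ne', ← rM k]; ring
    simp only [r]
    rw [e4]
    unfold PA
    field_simp
  have hrpos : ∀ k < k₀, 0 < r k := fun k hk => by
    rw [hr k hk]; exact div_pos (hNp _ (by omega)) (hNp _ (by omega))
  have hrec : ∀ k < k₀, PA n A {s(a, v), s(b, v)} (Dk k) =
      r k * (PA n A {s(b, v)} (Dk (k + 1)) - PA n A {s(a, v), s(b, v)} (Dk (k + 1))) := by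
    intro k hk
    have e1 := hNp k (by omega)
    have e2 := hNp (k + 1) (by omega)
    rw [hr k hk]
    unfold PA
    rw [← rC k]
    field_simp
    ring
  obtain ⟨m, rfl⟩ : ∃ m, k₀ = m + 1 := ⟨k₀ - 1, by omega⟩
  have main := alt_expand (fun k => PA n A {s(a, v), s(b, v)} (Dk k))
    (fun k => PA n A {s(b, v)} (Dk k)) r (m + 1) hrec m le_rfl
  have hT : T = r 0 * (∑ k ∈ Finset.Icc 1 (m + 1),
      (-1 : ℝ) ^ (k - 1) * PA n A {s(b, v)} (Dk k) * ∏ j ∈ Finset.Icc 1 (k - 1), r j) := by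
    simp only [T, Sk, r, h0, zero_add, h1]
    simp only [hDk, Nat.cast_add, Nat.cast_one]
  simp only [h0] at main
  rw [← hT] at main
  have hprod : 0 < r 0 * ∏ j ∈ Finset.Icc 1 m, r j := by
    refine mul_pos (hrpos 0 (by omega)) (Finset.prod_pos fun j hj => hrpos j ?_)
    have := (Finset.mem_Icc.1 hj).2
    omega
  have hc : 0 ≤ PA n A {s(a, v), s(b, v)} (Dk (m + 1)) := by unfold PA; positivity
  have hpc := mul_nonneg hprod.le hc
  refine ⟨fun hz => ?_, fun _ => ⟨fun ho => ?_, fun he => ?_⟩⟩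
  · have hz' : PA n A {s(a, v), s(b, v)} (Dk (m + 1)) = 0 := by
      unfold PA
      rw [show NAE n A {s(a, v), s(b, v)} (Dk (m + 1)) = 0 from hz]; simp
    rw [main, hz']; simp
  · rw [ho.neg_one_pow] at main
    linarith
  · rw [he.neg_one_pow] at main
    linarith
end
end

section
/- For every ε > 0 there exist constants A > 0, η > 0 and n₀ such that the following holds: for all n ≥ n₀, all integers m with d := 2m/n satisfying n d² > 0, and every sequence d* = (d_1,…,d_n) of nonnegative integers with Σ_i d_i = 2m and Δ(d*)⁶ + n^ε ≤ η · n d², one has Pr_{G(n,m)}(d*) = Pr_{B_m}(d*) · exp( 1/4 − γ₂²/(4μ²(1−μ)²) ) · (1 + E) with |E| ≤ A·( (Δ(d*)⁶ + n^ε)/(n d²) + n^{ε−1/2} ), where Δ(d*) = max_i d_i, μ = d/(n−1) and γ₂ = (n−1)^{−2} Σ_i (d_i − d)². -/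
open Finset

noncomputable section

/-- `Pr_{D(G(n,m))}(D)`: probability that a uniformly random graph on `[n]` with exactly `m`
edges has degree sequence `D`. -/
def prG (n m : ℕ) (D : Fin n → ℕ) : ℝ :=
  (((Graphs n).filter (fun E => E.card = m ∧ ∀ i, deg E i = D i)).card : ℝ) /
    (((Graphs n).filter (fun E => E.card = m)).card : ℝ)

/-- `Pr_{B_m}(D)`: probability of `D` for `n` independent `Bin(n-1,p)` variables conditioned
on the sum being `2m` (independent of `p`). -/
def prB (n m : ℕ) (D : Fin n → ℕ) : ℝ :=
  if ∑ i, D i = 2 * m then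
    (∏ i, ((n - 1).choose (D i) : ℝ)) / ((n * (n - 1)).choose (2 * m) : ℝ)
  else 0


section comb
variable {V : Type*} [Fintype V] [DecidableEq V]

def dg (E : Finset (Sym2 V)) (i : V) : ℕ := (E.filter (fun e => i ∈ e)).card

def RR (d : V → ℤ) : Finset (Finset (Sym2 V)) :=
  Finset.univ.filter (fun E => (∀ e ∈ E, ¬ e.IsDiag) ∧ ∀ v, (dg E v : ℤ) = d v)

open Classical in
def cnt (d : V → ℤ) (Q : Finset (Sym2 V) → Prop) : ℝ := (((RR d).filter Q).card : ℝ)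

def ff (d : V → ℤ) : ℝ := ((RR d).card : ℝ)

abbrev ee (v : V) : V → ℤ := Pi.single v 1

lemma ee_apply (v w : V) : (ee v : V → ℤ) w = if w = v then 1 else 0 := by
  simp [ee, Pi.single_apply]

lemma mem_RR {d : V → ℤ} {E : Finset (Sym2 V)} :
    E ∈ RR d ↔ (∀ e ∈ E, ¬ e.IsDiag) ∧ ∀ v, (dg E v : ℤ) = d v := by
  simp [RR]

lemma cnt_nonneg (d : V → ℤ) (Q : Finset (Sym2 V) → Prop) : 0 ≤ cnt d Q := by
  unfold cnt; positivity

lemma ff_nonneg (d : V → ℤ) : 0 ≤ ff d := by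
  unfold ff; positivity

lemma cnt_mono {d : V → ℤ} {Q Q' : Finset (Sym2 V) → Prop}
    (h : ∀ E ∈ RR d, Q E → Q' E) : cnt d Q ≤ cnt d Q' := by
  classical
  unfold cnt
  norm_cast
  apply Finset.card_le_card
  intro E hE
  simp only [Finset.mem_filter] at hE ⊢
  exact ⟨hE.1, h E hE.1 hE.2⟩

lemma cnt_congr {d : V → ℤ} {Q Q' : Finset (Sym2 V) → Prop}
    (h : ∀ E ∈ RR d, (Q E ↔ Q' E)) : cnt d Q = cnt d Q' :=
  le_antisymm (cnt_mono fun E hE => (h E hE).1) (cnt_mono fun E hE => (h E hE).2)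

lemma cnt_eq_ff {d : V → ℤ} {Q : Finset (Sym2 V) → Prop}
    (h : ∀ E ∈ RR d, Q E) : cnt d Q = ff d := by
  classical
  unfold cnt ff
  rw [Finset.filter_true_of_mem h]

lemma cnt_le_ff (d : V → ℤ) (Q : Finset (Sym2 V) → Prop) : cnt d Q ≤ ff d := by
  classical
  unfold cnt ff
  norm_cast
  apply Finset.card_le_card (Finset.filter_subset _ _)

lemma cnt_eq_zero {d : V → ℤ} {Q : Finset (Sym2 V) → Prop}
    (h : ∀ E ∈ RR d, ¬ Q E) : cnt d Q = 0 := by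
  classical
  unfold cnt
  rw [Finset.filter_false_of_mem h]; simp

open Classical in
lemma cnt_eq_sum (d : V → ℤ) (Q : Finset (Sym2 V) → Prop) :
    cnt d Q = ∑ E ∈ RR d, if Q E then (1:ℝ) else 0 := by
  unfold cnt
  simp

lemma cnt_and_add (d : V → ℤ) (Q P : Finset (Sym2 V) → Prop) :
    cnt d Q = cnt d (fun E => Q E ∧ P E) + cnt d (fun E => Q E ∧ ¬ P E) := by
  classical
  rw [cnt_eq_sum, cnt_eq_sum, cnt_eq_sum, ← Finset.sum_add_distrib]
  apply Finset.sum_congr rfl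
  intro E _
  by_cases h1 : Q E <;> by_cases h2 : P E <;> simp [h1, h2]

lemma ff_eq_zero_of_neg {d : V → ℤ} {v : V} (h : d v < 0) : ff d = 0 := by
  unfold ff
  have : RR d = ∅ := by
    apply Finset.eq_empty_of_forall_notMem
    intro E hE
    have := (mem_RR.1 hE).2 v
    omega
  simp [this]

lemma dg_insert {E : Finset (Sym2 V)} {s t : V} (hst : s ≠ t) (h : s(s,t) ∉ E) (v : V) :
    (dg (insert s(s,t) E) v : ℤ) = dg E v + ee s v + ee t v := by
  unfold dg
  rw [Finset.filter_insert]
  rw [ee_apply, ee_apply]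
  by_cases h1 : v = s
  · subst h1
    simp [h, hst]
  · by_cases h2 : v = t
    · subst h2
      simp [h, h1]
    · simp [h1, h2]

/-- edge toggle -/
lemma toggle (d : V → ℤ) {s t : V} (hst : s ≠ t) (Q : Finset (Sym2 V) → Prop) :
    cnt d (fun E => s(s,t) ∈ E ∧ Q E) =
      cnt (d - ee s - ee t) (fun E => s(s,t) ∉ E ∧ Q (insert s(s,t) E)) := by
  classical
  unfold cnt
  norm_cast
  apply Finset.card_nbij' (fun E => E.erase s(s,t)) (fun E => insert s(s,t) E)
  · intro E hE
    simp only [Finset.coe_filter, Set.mem_ofPred_eq, mem_RR] at hE ⊢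
    obtain ⟨⟨h1, h2⟩, h3, h4⟩ := hE
    refine ⟨⟨fun e he => h1 e (Finset.mem_of_mem_erase he), fun v => ?_⟩, by simp, ?_⟩
    · have := dg_insert (E := E.erase s(s,t)) hst (by simp) v
      rw [Finset.insert_erase h3, h2 v] at this
      simp only [Pi.sub_apply]
      omega
    · rwa [Finset.insert_erase h3]
  · intro E hE
    simp only [Finset.coe_filter, Set.mem_ofPred_eq, mem_RR] at hE ⊢
    obtain ⟨⟨h1, h2⟩, h3, h4⟩ := hE
    refine ⟨⟨?_, fun v => ?_⟩, by simp, h4⟩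
    · intro e he
      rcases Finset.mem_insert.1 he with rfl | he
      · simpa using hst
      · exact h1 e he
    · rw [dg_insert hst h3, h2 v]
      simp only [Pi.sub_apply]
      omega
  · intro E hE
    simp only [Finset.coe_filter, Set.mem_ofPred_eq] at hE
    exact Finset.insert_erase hE.2.1
  · intro E hE
    simp only [Finset.coe_filter, Set.mem_ofPred_eq] at hE
    exact Finset.erase_insert hE.2.1

lemma card_nbr {E : Finset (Sym2 V)} (v : V) :
    (Finset.univ.filter (fun u => s(v,u) ∈ E)).card = dg E v := by
  unfold dg
  apply Finset.card_bij (fun u _ => s(v,u))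
  · intro u hu
    simpa using hu
  · intro u _ u' _ h
    have := Sym2.congr_right.1 h
    exact this
  · intro e he
    simp only [Finset.mem_filter] at he
    obtain ⟨u, rfl⟩ := he.2
    exact ⟨u, by simpa using he.1, rfl⟩

open Classical in
lemma sum_cnt {ι : Type*} [Fintype ι] (d : V → ℤ) (Q : ι → Finset (Sym2 V) → Prop) :
    ∑ u, cnt d (Q u) = ∑ E ∈ RR d, ((Finset.univ.filter (fun u => Q u E)).card : ℝ) := by
  simp_rw [cnt_eq_sum]
  rw [Finset.sum_comm]
  apply Finset.sum_congr rfl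
  intro E _
  simp

lemma RR_card_nbr {d : V → ℤ} {E : Finset (Sym2 V)} (hE : E ∈ RR d) (v : V) :
    ((Finset.univ.filter (fun u => s(v,u) ∈ E)).card : ℤ) = d v := by
  rw [card_nbr, (mem_RR.1 hE).2 v]

lemma RR_ne {d : V → ℤ} {E : Finset (Sym2 V)} (hE : E ∈ RR d) {u v : V} (h : s(u,v) ∈ E) :
    u ≠ v := by
  have := (mem_RR.1 hE).1 _ h
  simpa using this

lemma RR_nadj {d : V → ℤ} {E : Finset (Sym2 V)} (hE : E ∈ RR d) {v : V} (hv : d v ≤ 0) (u : V) :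
    s(v,u) ∉ E := by
  intro h
  have h1 := RR_card_nbr hE v
  have : 0 < (Finset.univ.filter (fun u => s(v,u) ∈ E)).card :=
    Finset.card_pos.2 ⟨u, by simpa using h⟩
  omega

lemma RR_leaf {d : V → ℤ} {E : Finset (Sym2 V)} (hE : E ∈ RR d) {v : V} (hv : d v = 1) {u w : V}
    (hu : s(v,u) ∈ E) (hw : s(v,w) ∈ E) : u = w := by
  have h1 := RR_card_nbr hE v
  rw [hv] at h1
  have h2 : (Finset.univ.filter (fun u => s(v,u) ∈ E)).card ≤ 1 := by omega
  exact Finset.card_le_one.1 h2 u (by simpa using hu) w (by simpa using hw)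

lemma sum_nbr (d : V → ℤ) (v : V) : ∑ u, cnt d (fun E => s(v,u) ∈ E) = d v * ff d := by
  classical
  rw [sum_cnt]
  rw [Finset.sum_congr rfl (g := fun _ => (d v : ℝ))]
  · simp [ff, mul_comm]
  · intro E hE
    have := RR_card_nbr hE v
    rw [← this]
    push_cast
    congr!

/-- number of realizations where the neighbour of `l` is in the closed neighbourhood of `a` -/
def BB (d : V → ℤ) (l a : V) : ℝ :=
  ∑ u, cnt d (fun E => s(l,u) ∈ E ∧ (u = a ∨ s(a,u) ∈ E))

lemma BB_nonneg (d : V → ℤ) (l a : V) : 0 ≤ BB d l a :=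
  Finset.sum_nonneg fun _ _ => cnt_nonneg _ _

/-- leaf removal -/
lemma leaf_toggle (d : V → ℤ) {l u : V} (hlu : l ≠ u) (hl : d l = 1) (Q : Finset (Sym2 V) → Prop) :
    cnt d (fun E => s(l,u) ∈ E ∧ Q E) = cnt (d - ee l - ee u) (fun E => Q (insert s(l,u) E)) := by
  rw [toggle _ hlu]
  apply cnt_congr
  intro E hE
  have := RR_nadj hE (v := l) (by simp [ee_apply, hl, hlu]) u
  simp [this]

lemma leaf_toggle' (d : V → ℤ) {l u : V} (hlu : l ≠ u) (hl : d l = 1) :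
    cnt d (fun E => s(l,u) ∈ E) = ff (d - ee l - ee u) := by
  have := leaf_toggle d hlu hl (fun _ => True)
  simp only [and_true] at this
  rw [this]
  exact cnt_eq_ff (fun _ _ => trivial)

/-- the split identity -/
lemma split_id (d : V → ℤ) {a l : V} (hal : a ≠ l) (hl : d l = 0) :
    (d a : ℝ) * ff d = ff (d - ee a + ee l) - BB (d - ee a + ee l) l a := by
  set d' := d - ee a + ee l with hd'
  have hl' : d' l = 1 := by simp [hd', ee_apply, hl, hal.symm]
  have h1 : ff d' = ∑ u, cnt d' (fun E => s(l,u) ∈ E) := by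
    rw [sum_nbr, hl']; simp
  rw [← sum_nbr, h1, BB, ← Finset.sum_sub_distrib]
  apply Finset.sum_congr rfl
  intro u _
  have h2 := cnt_and_add d' (fun E => s(l,u) ∈ E) (fun E => (u = a ∨ s(a,u) ∈ E))
  rw [h2]
  rw [add_sub_cancel_left]
  by_cases hua : u = a
  · subst hua
    rw [cnt_eq_zero, cnt_eq_zero]
    · intro E hE; simp
    · intro E hE h; exact RR_ne hE h rfl
  by_cases hul : u = l
  · subst hul
    rw [cnt_eq_zero, cnt_eq_zero]
    · intro E hE h; exact RR_ne hE h.1 rfl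
    · intro E hE h
      rw [Sym2.eq_swap] at h
      exact RR_nadj hE hl.le _ h
  have h3 := toggle d (Ne.symm hua) (fun _ => True)
  have h4 := leaf_toggle d' (Ne.symm hul) hl' (fun E => ¬ (u = a ∨ s(a,u) ∈ E))
  simp only [and_true] at h3
  rw [h3, h4]
  have h5 : d' - ee l - ee u = d - ee a - ee u := by rw [hd']; abel
  rw [h5]
  apply cnt_congr
  intro E hE
  simp only [Finset.mem_insert, Sym2.eq_iff]
  grind

/-- crude switching -/
lemma crude_one (d : V → ℤ) {l a u x y : V} (hal : a ≠ l) (hl : d l = 1) :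
    cnt d (fun E => (s(l,u) ∈ E ∧ (u = a ∨ s(a,u) ∈ E)) ∧ s(x,y) ∈ E ∧ x ≠ u ∧ y ≠ u ∧ s(u,y) ∉ E)
     ≤ cnt d (fun E => s(l,x) ∈ E ∧ s(u,y) ∈ E ∧ (u = a ∨ s(a,u) ∈ E)) := by
  by_cases hd : x ≠ u ∧ y ≠ u ∧ x ≠ l ∧ y ≠ l ∧ x ≠ y ∧ u ≠ l
  · obtain ⟨h1, h2, h3, h4, h5, h6⟩ := hd
    have k1 := leaf_toggle d (Ne.symm h6) hl (fun E => s(x,y) ∈ E ∧ ((u = a ∨ s(a,u) ∈ E) ∧ s(u,y) ∉ E))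
    have k2 := leaf_toggle d (Ne.symm h3) hl (fun E => s(u,y) ∈ E ∧ (u = a ∨ s(a,u) ∈ E))
    rw [k2]
    refine le_trans (cnt_mono (Q' := fun E => s(l,u) ∈ E ∧ (s(x,y) ∈ E ∧ ((u = a ∨ s(a,u) ∈ E) ∧ s(u,y) ∉ E))) (by intro E _; tauto)) ?_
    rw [k1]
    have k3 := toggle (d - ee l - ee u) h5 (fun E => (u = a ∨ s(a,u) ∈ E) ∧ s(u,y) ∉ E)
    have k4 := toggle (d - ee l - ee x) (Ne.symm h2) (fun E => (u = a ∨ s(a,u) ∈ E))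
    refine le_trans (cnt_mono (Q' := fun E => s(x,y) ∈ E ∧ ((u = a ∨ s(a,u) ∈ E) ∧ s(u,y) ∉ E)) ?_) (le_trans k3.le (le_trans ?_ (le_trans k4.ge (cnt_mono ?_))))
    · intro E hE
      simp only [Finset.mem_insert, Sym2.eq_iff]
      rintro ⟨g1, g2, g3⟩
      refine ⟨?_, ?_, ?_⟩
      · grind
      · grind
      · grind
    · have : d - ee l - ee x - ee u - ee y = d - ee l - ee u - ee x - ee y := by abel
      rw [this]
      apply cnt_mono
      intro E hE
      simp only [Finset.mem_insert, Sym2.eq_iff]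
      rintro ⟨g1, g2, g3⟩
      refine ⟨?_, ?_⟩
      · grind
      · grind
    · intro E hE
      simp only [Finset.mem_insert]
      tauto
  · refine le_of_eq_of_le (cnt_eq_zero ?_) (cnt_nonneg _ _)
    rintro E hE ⟨⟨g1, g2⟩, g3, g4, g5, g6⟩
    apply hd
    refine ⟨g4, g5, ?_, ?_, RR_ne hE g3, (RR_ne hE g1).symm⟩
    · rintro rfl
      exact g5 (RR_leaf hE hl g3 g1)
    · rintro rfl
      rw [Sym2.eq_swap] at g3
      exact g4 (RR_leaf hE hl g3 g1)

end comb

section comb2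
variable {V : Type*} [Fintype V] [DecidableEq V]

lemma le_sum_cnt {ι : Type*} [Fintype ι] (d : V → ℤ) (P : Finset (Sym2 V) → Prop)
    (R : ι → Finset (Sym2 V) → Prop) (c : ℝ)
    (h : ∀ E ∈ RR d, P E → ∀ (g : ι → ℝ), (∀ i, 0 ≤ g i) → (∀ i, R i E → 1 ≤ g i) → c ≤ ∑ i, g i) :
    cnt d P * c ≤ ∑ i, cnt d (fun E => P E ∧ R i E) := by
  classical
  simp_rw [cnt_eq_sum]
  rw [Finset.sum_comm, Finset.sum_mul]
  apply Finset.sum_le_sum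
  intro E hE
  by_cases hP : P E
  · simp only [hP, true_and, if_true, one_mul]
    apply h E hE hP
    · intro i; split_ifs <;> norm_num
    · intro i hi; simp [hi]
  · simp [hP]

lemma sum_cnt_le {ι : Type*} [Fintype ι] (d : V → ℤ)
    (R : ι → Finset (Sym2 V) → Prop) (c : ℝ)
    (h : ∀ E ∈ RR d, ∃ (g : ι → ℝ), (∀ i, 0 ≤ g i) ∧ (∀ i, R i E → 1 ≤ g i) ∧ ∑ i, g i ≤ c) :
    ∑ i, cnt d (R i) ≤ c * ff d := by
  classical
  simp_rw [cnt_eq_sum]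
  rw [Finset.sum_comm]
  have : c * ff d = ∑ E ∈ RR d, c := by simp [ff, mul_comm]
  rw [this]
  apply Finset.sum_le_sum
  intro E hE
  obtain ⟨g, h0, h1, h2⟩ := h E hE
  refine le_trans (Finset.sum_le_sum fun i _ => ?_) h2
  split_ifs with hi
  · exact h1 i hi
  · exact h0 i

lemma RR_sum {d : V → ℤ} {E : Finset (Sym2 V)} (hE : E ∈ RR d) (v : V) :
    ∑ u, (if s(v,u) ∈ E then (1:ℝ) else 0) = d v := by
  rw [← RR_card_nbr hE v]; simp

lemma RR_sum' {d : V → ℤ} {E : Finset (Sym2 V)} (hE : E ∈ RR d) (v : V) :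
    ∑ u, (if s(u,v) ∈ E then (1:ℝ) else 0) = d v := by
  rw [← RR_sum hE v]
  simp_rw [Sym2.eq_swap]

lemma crude (d : V → ℤ) {l a : V} (hal : a ≠ l) (hl : d l = 1) (Δ : ℤ) (hΔ : 1 ≤ Δ)
    (hd : ∀ v, d v ≤ Δ) (M : ℝ) (hM : ((∑ v, d v : ℤ) : ℝ) = M) :
    BB d l a * (M - 3 * Δ ^ 2) ≤ 2 * Δ ^ 2 * ff d := by
  have hΔ' : (1:ℝ) ≤ Δ := by exact_mod_cast hΔ
  have hd' : ∀ v, (d v : ℝ) ≤ Δ := fun v => by exact_mod_cast hd v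
  have key1 : ∀ u, cnt d (fun E => s(l,u) ∈ E ∧ (u = a ∨ s(a,u) ∈ E)) * (M - 3 * Δ ^ 2) ≤
      ∑ i : V × V, cnt d (fun E => (s(l,u) ∈ E ∧ (u = a ∨ s(a,u) ∈ E)) ∧
        (s(i.1,i.2) ∈ E ∧ i.1 ≠ u ∧ i.2 ≠ u ∧ s(u,i.2) ∉ E)) := by
    intro u
    apply le_sum_cnt
    intro E hE _ g g0 g1
    have e1 : ∀ x y, (if s(x,y) ∈ E then (1:ℝ) else 0) ≤ g (x,y) +
        (if x = u then (if s(x,y) ∈ E then (1:ℝ) else 0) else 0) +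
        (if y = u then (if s(x,y) ∈ E then (1:ℝ) else 0) else 0) +
        (if s(u,y) ∈ E then 1 else 0) * (if s(x,y) ∈ E then (1:ℝ) else 0) := by
      intro x y
      have := g0 (x,y)
      have h2 := g1 (x,y)
      by_cases c1 : s(x,y) ∈ E
      · simp only [c1, if_true, mul_one]
        by_cases c2 : x = u
        · rw [if_pos c2]
          have : (0:ℝ) ≤ if y = u then 1 else 0 := by split_ifs <;> norm_num
          have : (0:ℝ) ≤ if s(u,y) ∈ E then 1 else 0 := by split_ifs <;> norm_num
          linarith
        by_cases c3 : y = u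
        · rw [if_pos c3, if_neg c2]
          have : (0:ℝ) ≤ if s(u,y) ∈ E then 1 else 0 := by split_ifs <;> norm_num
          linarith
        by_cases c4 : s(u,y) ∈ E
        · rw [if_pos c4, if_neg c2, if_neg c3]; linarith
        · have := h2 ⟨c1, c2, c3, c4⟩
          rw [if_neg c4, if_neg c2, if_neg c3]; linarith
      · simp only [c1, if_false, mul_zero, ite_self]
        linarith
    have e2 := Finset.sum_le_sum (fun x (_ : x ∈ Finset.univ) =>
      Finset.sum_le_sum (fun y (_ : y ∈ Finset.univ) => e1 x y))
    simp only [Finset.sum_add_distrib] at e2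
    rw [← Fintype.sum_prod_type (f := g)] at e2
    have s1 : ∑ x, ∑ y, (if s(x,y) ∈ E then (1:ℝ) else 0) = M := by
      rw [← hM]; push_cast
      exact Finset.sum_congr rfl fun x _ => RR_sum hE x
    have s2 : ∑ x, ∑ y, (if x = u then (if s(x,y) ∈ E then (1:ℝ) else 0) else 0) = d u := by
      rw [← RR_sum hE u, Finset.sum_comm]
      simp
    have s3 : ∑ x, ∑ y, (if y = u then (if s(x,y) ∈ E then (1:ℝ) else 0) else 0) = d u := by
      rw [← RR_sum' hE u]
      simp
    have s4 : ∑ x, ∑ y, (if s(u,y) ∈ E then 1 else 0) * (if s(x,y) ∈ E then (1:ℝ) else 0) ≤ Δ * Δ := by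
      rw [Finset.sum_comm]
      simp_rw [← Finset.mul_sum, RR_sum' hE]
      calc _ ≤ ∑ y, (if s(u,y) ∈ E then (1:ℝ) else 0) * Δ := by
            apply Finset.sum_le_sum
            intro y _
            apply mul_le_mul_of_nonneg_left (hd' y)
            split_ifs <;> norm_num
        _ = d u * Δ := by rw [← Finset.sum_mul, RR_sum hE]
        _ ≤ _ := by nlinarith [hd' u]
    rw [s1, s2, s3] at e2
    have := hd' u
    nlinarith
  have key2 : ∑ j : V × V × V, cnt d (fun E => s(l,j.2.1) ∈ E ∧ s(j.1,j.2.2) ∈ E ∧ (j.1 = a ∨ s(a,j.1) ∈ E))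
      ≤ 2 * Δ ^ 2 * ff d := by
    apply sum_cnt_le
    intro E hE
    refine ⟨fun j => ((if j.1 = a then 1 else 0) + (if s(a,j.1) ∈ E then 1 else 0)) *
      ((if s(l,j.2.1) ∈ E then 1 else 0) * (if s(j.1,j.2.2) ∈ E then 1 else 0)), ?_, ?_, ?_⟩
    · intro j; positivity
    · rintro ⟨u, x, y⟩ ⟨h1, h2, h3⟩
      simp only [h1, h2, if_true] at h3 ⊢
      by_cases c : u = a
      · subst c
        simp only [if_true]
        split_ifs <;> norm_num
      · have : s(a,u) ∈ E := by tauto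
        simp [this, c]
    · simp only [Fintype.sum_prod_type]
      have e3 : ∀ u, ∑ x, ∑ y, ((if u = a then (1:ℝ) else 0) + (if s(a,u) ∈ E then 1 else 0)) *
          ((if s(l,x) ∈ E then 1 else 0) * (if s(u,y) ∈ E then 1 else 0)) =
          ((if u = a then (1:ℝ) else 0) + (if s(a,u) ∈ E then 1 else 0)) * ((d l : ℝ) * d u) := by
        intro u
        rw [← RR_sum hE l, ← RR_sum hE u, Finset.sum_mul_sum, Finset.mul_sum]
        exact Finset.sum_congr rfl fun x _ => by rw [Finset.mul_sum]
      rw [Finset.sum_congr rfl fun u _ => e3 u, hl]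
      calc _ ≤ ∑ u, ((if u = a then (1:ℝ) else 0) + (if s(a,u) ∈ E then 1 else 0)) * Δ := by
            apply Finset.sum_le_sum
            intro u _
            have := hd' u
            push_cast
            rw [one_mul]
            apply mul_le_mul_of_nonneg_left this
            positivity
        _ = (1 + d a) * Δ := by
            rw [← Finset.sum_mul, Finset.sum_add_distrib, RR_sum hE]; simp
        _ ≤ _ := by nlinarith [hd' a]
  unfold BB
  rw [Finset.sum_mul]
  refine le_trans (Finset.sum_le_sum fun u _ => le_trans (key1 u) (Finset.sum_le_sum fun i _ => crude_one d hal hl)) ?_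
  rw [Fintype.sum_prod_type] at key2
  exact key2

/-- crude bound with uniform parameter -/
lemma crude' (d : V → ℤ) {l a : V} (hal : a ≠ l) (hl : d l = 1) (Δ : ℤ) (hΔ : 1 ≤ Δ)
    (hd : ∀ v, d v ≤ Δ) (S θ : ℝ) (hθ : 0 < θ) (hS : 2 * Δ ^ 2 ≤ θ * (S - 3 * Δ ^ 2))
    (hM : S ≤ ((∑ v, d v : ℤ) : ℝ)) :
    BB d l a ≤ θ * ff d := by
  have h := crude d hal hl Δ hΔ hd _ rfl
  have hΔ' : (1:ℝ) ≤ Δ := by exact_mod_cast hΔ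
  have hb := BB_nonneg d l a
  have hf := ff_nonneg d
  have h1 : 0 < S - 3 * (Δ:ℝ)^2 := by
    by_contra hc
    push Not at hc
    nlinarith
  have h2 : BB d l a * (S - 3 * Δ^2) ≤ (θ * ff d) * (S - 3 * Δ ^ 2) := by
    nlinarith
  exact le_of_mul_le_mul_right h2 h1

lemma mul_ff_nonneg (c : V → ℤ) (u : V) : 0 ≤ (c u : ℝ) * ff (c - ee u) := by
  rcases lt_or_ge (c u) 0 with h | h
  · rw [ff_eq_zero_of_neg (v := u)]; simp
    simp; omega
  · have : (0:ℝ) ≤ c u := by exact_mod_cast h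
    exact mul_nonneg this (ff_nonneg _)

lemma sum_ee (v : V) : ∑ w, (ee v : V → ℤ) w = 1 := by
  simp [ee]

lemma leaf_sum (c : V → ℤ) {l : V} (hl : c l = 0) :
    ff (c + ee l) = ∑ u, ff (c - ee u) := by
  have h := sum_nbr (c + ee l) l
  have h1 : (c + ee l) l = 1 := by simp [hl]
  rw [h1] at h
  simp only [Int.cast_one, one_mul] at h
  rw [← h]
  apply Finset.sum_congr rfl
  intro u _
  by_cases hul : u = l
  · subst hul
    rw [cnt_eq_zero, ff_eq_zero_of_neg (v := u)]
    · simp [hl]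
    · intro E hE h; exact RR_ne hE h rfl
  · rw [leaf_toggle' _ (Ne.symm hul) h1]
    congr 1; abel

lemma ratio_one (c : V → ℤ) {l : V} (hl : c l = 0) (Δ : ℤ) (hΔ : 1 ≤ Δ)
    (hd : ∀ v, c v ≤ Δ) (S θ : ℝ) (hθ : 0 < θ) (hS : 2 * Δ ^ 2 ≤ θ * (S - 3 * Δ ^ 2))
    (hM : S + 1 ≤ ((∑ v, c v : ℤ) : ℝ)) (u v : V) :
    (1 - θ) * (c u * ff (c - ee v)) ≤ c v * ff (c - ee u) := by
  by_cases huv : u = v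
  · subst huv
    have := mul_ff_nonneg c u
    nlinarith
  by_cases hul : u = l
  · subst hul
    rw [hl, ff_eq_zero_of_neg (d := c - ee u) (v := u)]
    · simp
    · simp [hl]
  by_cases hvl : v = l
  · subst hvl
    rw [hl, ff_eq_zero_of_neg (d := c - ee v) (v := v)]
    · simp
    · simp [hl]
  have h1 := split_id (c - ee u) (a := v) (l := l) hvl (by simp [hl, Ne.symm hul])
  have h2 := split_id (c - ee v) (a := u) (l := l) hul (by simp [hl, Ne.symm hvl])
  have e1 : (c - ee u) v = c v := by simp [Ne.symm huv]
  have e2 : (c - ee v) u = c u := by simp [huv]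
  rw [e1] at h1
  rw [e2] at h2
  have e3 : c - ee v - ee u + ee l = c - ee u - ee v + ee l := by abel
  rw [e3] at h2
  rw [h1, h2]
  set D := c - ee u - ee v + ee l with hD
  have hb := crude' D (l := l) (a := v) hvl (by simp [hD, hl, Ne.symm hul, Ne.symm hvl]) Δ hΔ ?_ S θ hθ hS ?_
  · have := BB_nonneg D l u
    have := ff_nonneg D
    rcases le_or_gt θ 1 with ht | ht
    · nlinarith
    · have h3 : 0 ≤ (c u : ℝ) * ff (c - ee v) := by
        by_cases hc : 0 ≤ c u
        · have : (0:ℝ) ≤ c u := by exact_mod_cast hc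
          exact mul_nonneg this (ff_nonneg _)
        · rw [ff_eq_zero_of_neg (v := u)]; simp
          rw [e2]; omega
      have h4 : 0 ≤ (c v : ℝ) * ff (c - ee u) := by
        by_cases hc : 0 ≤ c v
        · have : (0:ℝ) ≤ c v := by exact_mod_cast hc
          exact mul_nonneg this (ff_nonneg _)
        · rw [ff_eq_zero_of_neg (v := v)]; simp
          rw [e1]; omega
      rw [h1] at h4
      rw [h2] at h3
      nlinarith
  · intro w
    by_cases hw : w = l
    · subst hw; simp [hD, hl, Ne.symm hul, Ne.symm hvl]; omega
    · have := hd w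
      simp only [hD, Pi.add_apply, Pi.sub_apply, ee_apply, hw, if_false]
      split_ifs <;> omega
  · have : ∑ w, D w = ∑ w, c w - 1 := by
      simp only [hD, Pi.add_apply, Pi.sub_apply, Finset.sum_add_distrib, Finset.sum_sub_distrib, sum_ee]
      ring
    rw [this]; push_cast; push_cast at hM; linarith

lemma leaf_prob (c : V → ℤ) {l : V} (hl : c l = 0) (Δ : ℤ) (hΔ : 1 ≤ Δ)
    (hd : ∀ v, c v ≤ Δ) (S θ : ℝ) (hθ : 0 < θ) (hS : 2 * Δ ^ 2 ≤ θ * (S - 3 * Δ ^ 2))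
    (hM : S + 1 ≤ ((∑ v, c v : ℤ) : ℝ)) (u : V) :
    (1 - θ) * (c u * ff (c + ee l)) ≤ ((∑ v, c v : ℤ) : ℝ) * ff (c - ee u) ∧
    (1 - θ) * (((∑ v, c v : ℤ) : ℝ) * ff (c - ee u)) ≤ c u * ff (c + ee l) := by
  rw [leaf_sum c hl]
  push_cast
  simp only [Finset.mul_sum, Finset.sum_mul]
  exact ⟨Finset.sum_le_sum fun v _ => ratio_one c hl Δ hΔ hd S θ hθ hS hM u v,
    Finset.sum_le_sum fun v _ => ratio_one c hl Δ hΔ hd S θ hθ hS hM v u⟩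

end comb2

section comb3
variable {V : Type*} [Fintype V] [DecidableEq V]

def WW (e : V → ℤ) (l a u : V) : ℝ := cnt e (fun E => s(a,u) ∈ E ∧ s(l,u) ∈ E)
def XX (D : V → ℤ) (l z u : V) : ℝ := cnt D (fun E => s(z,u) ∈ E ∧ s(l,u) ∈ E)
def YY (D : V → ℤ) (l z a u : V) : ℝ := cnt D (fun E => s(z,u) ∈ E ∧ (s(a,u) ∈ E ∧ s(l,u) ∈ E))

lemma BB_eq (e : V → ℤ) (l a : V) :
    BB e l a = cnt e (fun E => s(l,a) ∈ E) + ∑ u, WW e l a u := by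
  classical
  have h : ∀ u, cnt e (fun E => s(l,u) ∈ E ∧ (u = a ∨ s(a,u) ∈ E)) =
      (if u = a then cnt e (fun E => s(l,a) ∈ E) else 0) + WW e l a u := by
    intro u
    by_cases hu : u = a
    · subst hu
      have : WW e l u u = 0 := cnt_eq_zero (fun E hE h => RR_ne hE h.1 rfl)
      rw [this]
      simp
    · simp only [hu, if_false, false_or, zero_add, WW]
      exact cnt_congr fun E _ => and_comm
  unfold BB
  rw [Finset.sum_congr rfl fun u _ => h u, Finset.sum_add_distrib]
  simp

lemma W_self (e : V → ℤ) (l a : V) : WW e l a a = 0 :=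
  cnt_eq_zero (fun _ hE h => RR_ne hE h.1 rfl)

lemma X_zero (D : V → ℤ) (l z u : V) (h : u = l ∨ u = z) : XX D l z u = 0 := by
  apply cnt_eq_zero
  rintro E hE ⟨h1, h2⟩
  rcases h with rfl | rfl
  · exact RR_ne hE h2 rfl
  · exact RR_ne hE h1 rfl

lemma Y_zero (D : V → ℤ) (l z a u : V) (h : u = l ∨ u = z ∨ u = a) : YY D l z a u = 0 := by
  apply cnt_eq_zero
  rintro E hE ⟨h1, h2, h3⟩
  rcases h with rfl | rfl | rfl
  · exact RR_ne hE h3 rfl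
  · exact RR_ne hE h1 rfl
  · exact RR_ne hE h2 rfl

lemma W_eq (e : V → ℤ) {l a z u : V} (haz : a ≠ z) (hlz : l ≠ z) (hal : a ≠ l)
    (hz : e z = 0) (hua : u ≠ a) :
    WW e l a u + YY (e - ee a + ee z) l z a u = XX (e - ee a + ee z) l z u := by
  by_cases hul : u = l
  · rw [X_zero _ _ _ _ (Or.inl hul), Y_zero _ _ _ _ _ (Or.inl hul), add_zero]
    subst hul
    exact cnt_eq_zero (fun _ hE h => RR_ne hE h.2 rfl)
  by_cases huz : u = z
  · rw [X_zero _ _ _ _ (Or.inr huz), Y_zero _ _ _ _ _ (Or.inr (Or.inl huz)), add_zero]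
    subst huz
    refine cnt_eq_zero (fun E hE h => ?_)
    have h2 := h.2
    rw [Sym2.eq_swap] at h2
    exact RR_nadj hE hz.le _ h2
  set D := e - ee a + ee z with hD
  have hDz : D z = 1 := by simp [hD, hz, haz.symm]
  have h1 := cnt_and_add D (fun E => s(z,u) ∈ E ∧ s(l,u) ∈ E) (fun E => s(a,u) ∈ E)
  have h2 : cnt D (fun E => (s(z,u) ∈ E ∧ s(l,u) ∈ E) ∧ s(a,u) ∈ E) = YY D l z a u :=
    cnt_congr fun E _ => by tauto
  have h3 : cnt D (fun E => (s(z,u) ∈ E ∧ s(l,u) ∈ E) ∧ ¬ s(a,u) ∈ E) = WW e l a u := by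
    have k1 := leaf_toggle D (Ne.symm huz) hDz (fun E => s(l,u) ∈ E ∧ ¬ s(a,u) ∈ E)
    have k2 := toggle e (Ne.symm hua) (fun E => s(l,u) ∈ E)
    unfold WW
    rw [k2]
    have k3 : D - ee z - ee u = e - ee a - ee u := by rw [hD]; abel
    rw [k3] at k1
    rw [cnt_congr (Q' := fun E => s(z,u) ∈ E ∧ (s(l,u) ∈ E ∧ ¬ s(a,u) ∈ E)) (fun E _ => by tauto), k1]
    apply cnt_congr
    intro E _
    simp only [Finset.mem_insert, Sym2.eq_iff]
    grind
  unfold XX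
  rw [h1, h2, h3, add_comm]

lemma X_eq (D : V → ℤ) {l z u : V} (hlz : l ≠ z) (hl : D l = 1) (hz : D z = 1) (hul : u ≠ l)
    (huz : u ≠ z) : XX D l z u = ff (D - ee z - ee u - ee l - ee u) := by
  unfold XX
  rw [leaf_toggle D (Ne.symm huz) hz]
  rw [← leaf_toggle' (D - ee z - ee u) (Ne.symm hul) (by simp [hl, hlz, Ne.symm hul])]
  apply cnt_congr
  intro E _
  simp only [Finset.mem_insert, Sym2.eq_iff]
  grind

lemma sum_sub_ee (D : V → ℤ) (v : V) : ∑ w, (D - ee v) w = ∑ w, D w - 1 := by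
  simp only [Pi.sub_apply, Finset.sum_sub_distrib, sum_ee]

lemma sum_add_ee (D : V → ℤ) (v : V) : ∑ w, (D + ee v) w = ∑ w, D w + 1 := by
  simp only [Pi.add_apply, Finset.sum_add_distrib, sum_ee]

lemma sub_ee_le {D : V → ℤ} {Δ : ℤ} (h : ∀ v, D v ≤ Δ) (w : V) : ∀ v, (D - ee w) v ≤ Δ := by
  intro v
  have := h v
  simp only [Pi.sub_apply, ee_apply]
  split_ifs <;> omega

lemma add_ee_le {D : V → ℤ} {Δ : ℤ} (hΔ : 1 ≤ Δ) (h : ∀ v, D v ≤ Δ) (w : V) (hw : D w = 0) :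
    ∀ v, (D + ee w) v ≤ Δ := by
  intro v
  have := h v
  simp only [Pi.add_apply, ee_apply]
  split_ifs with hv
  · subst hv; omega
  · omega

lemma X_bound (D : V → ℤ) {l z : V} (u : V) (hlz : l ≠ z) (hl : D l = 1) (hz : D z = 1)
    (Δ : ℤ) (hΔ : 1 ≤ Δ)
    (hd : ∀ v, D v ≤ Δ) (S θ M : ℝ) (hθ : 0 < θ) (hθ1 : θ < 1) (hS : 2 * Δ ^ 2 ≤ θ * (S - 3 * Δ ^ 2))
    (hM : ((∑ v, D v : ℤ) : ℝ) = M) (hMS : S + 4 ≤ M) (hM3 : 3 ≤ M) :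
    (1 - θ) ^ 2 * (D u * (D u - 1) * ff D) ≤ (M - 1) * (M - 3) * XX D l z u ∧
    (1 - θ) ^ 2 * ((M - 1) * (M - 3) * XX D l z u) ≤ D u * (D u - 1) * ff D := by
  by_cases hu : u = l ∨ u = z
  · rw [X_zero _ _ _ _ hu]
    have : D u = 1 := by rcases hu with rfl | rfl <;> assumption
    simp [this]
  push Not at hu
  obtain ⟨hul, huz⟩ := hu
  rw [X_eq D hlz hl hz hul huz]
  have h1 := leaf_prob (D - ee z) (l := z) (by simp [hz]) Δ hΔ (sub_ee_le hd z) S θ hθ hS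
    (by rw [sum_sub_ee]; push_cast; push_cast at hM; linarith) u
  have h2 := leaf_prob (D - ee z - ee u - ee l) (l := l) (by simp [hl, hlz, Ne.symm hul]) Δ hΔ
    (sub_ee_le (sub_ee_le (sub_ee_le hd z) u) l) S θ hθ hS
    (by simp only [sum_sub_ee]; push_cast; push_cast at hM; linarith) u
  have e1 : D - ee z + ee z = D := by abel
  have e2 : D - ee z - ee u - ee l + ee l = D - ee z - ee u := by abel
  have e3 : (D - ee z) u = D u := by simp [huz]
  have e4 : (D - ee z - ee u - ee l) u = D u - 1 := by simp [huz, hul]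
  simp only [sum_sub_ee] at h1 h2
  rw [e1, e3] at h1
  rw [e2, e4] at h2
  push_cast at h1 h2 hM
  rw [hM] at h1 h2
  have e5 : M - 1 - 1 - 1 = M - 3 := by ring
  rw [e5] at h2
  set x : ℝ := (D u : ℝ) with hx
  have hF := ff_nonneg D
  set F := ff D
  by_cases hx1 : 1 ≤ D u
  · have hx1' : 1 ≤ x := by rw [hx]; exact_mod_cast hx1
    set G := ff (D - ee z - ee u)
    set X := ff (D - ee z - ee u - ee l - ee u)
    have ht : 0 < 1 - θ := by linarith
    obtain ⟨a1, a2⟩ := h1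
    obtain ⟨b1, b2⟩ := h2
    constructor
    · calc (1 - θ) ^ 2 * (x * (x - 1) * F) = ((1 - θ) * (x - 1)) * ((1 - θ) * (x * F)) := by ring
        _ ≤ ((1 - θ) * (x - 1)) * ((M - 1) * G) := by
            apply mul_le_mul_of_nonneg_left a1
            exact mul_nonneg ht.le (by linarith)
        _ = (M - 1) * ((1 - θ) * ((x - 1) * G)) := by ring
        _ ≤ (M - 1) * ((M - 3) * X) := by
            apply mul_le_mul_of_nonneg_left b1; linarith
        _ = _ := by ring
    · calc (1 - θ) ^ 2 * ((M - 1) * (M - 3) * X) = ((1 - θ) * (M - 1)) * ((1 - θ) * ((M - 3) * X)) := by ring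
        _ ≤ ((1 - θ) * (M - 1)) * ((x - 1) * G) := by
            apply mul_le_mul_of_nonneg_left b2
            exact mul_nonneg ht.le (by linarith)
        _ = (x - 1) * ((1 - θ) * ((M - 1) * G)) := by ring
        _ ≤ (x - 1) * (x * F) := by
            apply mul_le_mul_of_nonneg_left a2; linarith
        _ = _ := by ring
  · have h0 : ff (D - ee z - ee u - ee l - ee u) = 0 := by
      apply ff_eq_zero_of_neg (v := u)
      simp [huz, hul]; omega
    rw [h0]
    rcases lt_or_ge (D u) 0 with h | h
    · have : F = 0 := ff_eq_zero_of_neg h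
      simp [this]
    · have : D u = 0 := by omega
      simp [hx, this]

lemma F_bound (e : V → ℤ) {a z : V} (haz : a ≠ z) (hz : e z = 0)
    (Δ : ℤ) (hΔ : 1 ≤ Δ)
    (hd : ∀ v, e v ≤ Δ) (S θ : ℝ) (hθ : 0 < θ) (hS : 2 * Δ ^ 2 ≤ θ * (S - 3 * Δ ^ 2))
    (hMS : S ≤ ((∑ v, e v : ℤ) : ℝ)) :
    (1 - θ) * ff (e - ee a + ee z) ≤ e a * ff e ∧ e a * ff e ≤ ff (e - ee a + ee z) := by
  rw [split_id e haz hz]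
  have h := crude' (e - ee a + ee z) (l := z) (a := a) haz (by simp [hz, haz.symm]) Δ hΔ
    (add_ee_le hΔ (sub_ee_le hd a) z (by simp [hz, haz.symm])) S θ hθ hS
    (by rw [sum_add_ee, sum_sub_ee]; push_cast; push_cast at hMS; linarith)
  have := BB_nonneg (e - ee a + ee z) z a
  constructor <;> linarith

lemma Y_bound (D : V → ℤ) {l z a : V} (hlz : l ≠ z) (haz : a ≠ z) (hal : a ≠ l)
    (hl : D l = 1) (hz : D z = 1)
    (Δ : ℤ) (hΔ : 1 ≤ Δ)
    (hd : ∀ v, D v ≤ Δ) (S θ M : ℝ) (hθ : 0 < θ) (hθ1 : θ < 1) (hS : 2 * Δ ^ 2 ≤ θ * (S - 3 * Δ ^ 2))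
    (hM : ((∑ v, D v : ℤ) : ℝ) = M) (hMS : S + 6 ≤ M) (hM3 : 5 ≤ M) (u : V) :
    (1 - θ) ^ 3 * ((M - 3) * (M - 5) * YY D l z a u) ≤ Δ ^ 3 * ff (D - ee z - ee u) := by
  have hΔ' : (1:ℝ) ≤ Δ := by exact_mod_cast hΔ
  have hr : 0 ≤ (Δ:ℝ) ^ 3 * ff (D - ee z - ee u) := mul_nonneg (by positivity) (ff_nonneg _)
  by_cases hu : u = l ∨ u = z ∨ u = a
  · rw [Y_zero _ _ _ _ _ hu]; simpa using hr
  push Not at hu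
  obtain ⟨hul, huz, hua⟩ := hu
  set e := D - ee z - ee u with he
  have hel : e l = 1 := by simp [he, hl, hlz, Ne.symm hul]
  have hez : e z = 0 := by simp [he, hz, Ne.symm huz]
  have hed : ∀ v, e v ≤ Δ := sub_ee_le (sub_ee_le hd z) u
  have hsum : ((∑ v, e v : ℤ) : ℝ) = M - 2 := by
    simp only [he, sum_sub_ee]; push_cast; push_cast at hM; linarith
  have hYW : YY D l z a u = WW e l a u := by
    unfold YY WW
    rw [leaf_toggle D (Ne.symm huz) hz]
    apply cnt_congr
    intro E _
    simp only [Finset.mem_insert, Sym2.eq_iff]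
    grind
  have hWX := W_eq e (u := u) haz hlz hal hez hua
  have hY0 : 0 ≤ YY (e - ee a + ee z) l z a u := cnt_nonneg _ _
  set D' := e - ee a + ee z with hD'
  have hD'd : ∀ v, D' v ≤ Δ := add_ee_le hΔ (sub_ee_le hed a) z (by simp [hez, haz.symm])
  have hsum' : ((∑ v, D' v : ℤ) : ℝ) = M - 2 := by
    simp only [hD', sum_add_ee, sum_sub_ee]; push_cast; push_cast at hsum; linarith
  have hX := (X_bound D' (l := l) (z := z) u hlz (by simp [hD', hel, hlz, hal.symm])
    (by simp [hD', hez, haz.symm]) Δ hΔ hD'd S θ (M-2) hθ hθ1 hS hsum' (by linarith) (by linarith)).2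
  have hF := (F_bound e haz hez Δ hΔ hed S θ hθ hS (by rw [hsum]; linarith)).1
  have hF0 := ff_nonneg D'
  have he0 := ff_nonneg e
  have ht : 0 < 1 - θ := by linarith
  have hxx : (D' u : ℝ) * (D' u - 1) * ff D' ≤ Δ ^ 2 * ff D' := by
    rcases lt_or_ge (D' u) 0 with h | h
    · rw [ff_eq_zero_of_neg h]; simp
    · apply mul_le_mul_of_nonneg_right _ hF0
      have h1 : (0:ℝ) ≤ D' u := by exact_mod_cast h
      have h2 : (D' u : ℝ) ≤ Δ := by exact_mod_cast hD'd u
      nlinarith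
  have hea : (e a : ℝ) * ff e ≤ Δ * ff e := by
    apply mul_le_mul_of_nonneg_right _ he0
    exact_mod_cast hed a
  have e5 : (M - 2 - 1) * (M - 2 - 3) = (M - 3) * (M - 5) := by ring
  rw [e5] at hX
  have hm : 0 ≤ (M - 3) * (M - 5) := mul_nonneg (by linarith) (by linarith)
  rw [hYW]
  calc (1 - θ) ^ 3 * ((M - 3) * (M - 5) * WW e l a u)
      ≤ (1 - θ) ^ 3 * ((M - 3) * (M - 5) * XX D' l z u) := by
        apply mul_le_mul_of_nonneg_left _ (by positivity)
        apply mul_le_mul_of_nonneg_left _ hm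
        linarith
    _ = (1 - θ) * ((1 - θ) ^ 2 * ((M - 3) * (M - 5) * XX D' l z u)) := by ring
    _ ≤ (1 - θ) * (Δ ^ 2 * ff D') := by
        apply mul_le_mul_of_nonneg_left _ ht.le
        exact hX.trans hxx
    _ = Δ ^ 2 * ((1 - θ) * ff D') := by ring
    _ ≤ Δ ^ 2 * (Δ * ff e) := by
        apply mul_le_mul_of_nonneg_left _ (by positivity)
        exact hF.trans hea
    _ = _ := by ring

set_option maxHeartbeats 1000000 in
lemma num_step (M Δ k m2 t f F C X Y : ℝ) (ht0 : 0 < t) (ht : t ≤ 1/100) (hM : 0 < M) (htM : t * M = Δ ^ 2)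
    (hΔ : 1 ≤ Δ) (hk : 0 ≤ k) (hkΔ : k ≤ Δ) (hm2 : 0 ≤ m2) (hm2' : m2 ≤ Δ * M) (hf : 0 ≤ f) (hF : 0 ≤ F)
    (hC : 0 ≤ C) (hX : 0 ≤ X) (hY : 0 ≤ Y)
    (h1 : (1 - 4 * t) * (k * f) ≤ (M - 1) * C) (h2 : (1 - 4 * t) * ((M - 1) * C) ≤ k * f)
    (h3 : (1 - 4 * t) * F ≤ k * f) (h4 : k * f ≤ F)
    (h5 : (1 - 4 * t) ^ 2 * (m2 * F) ≤ (M - 1) * (M - 3) * X)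
    (h6 : (1 - 4 * t) ^ 2 * ((M - 1) * (M - 3) * X) ≤ m2 * F)
    (h7 : (1 - 4 * t) ^ 3 * ((M - 3) * (M - 5) * Y) ≤ Δ ^ 3 * F) :
    |C + X - Y - f * (k / M + k * m2 / M ^ 2)| * M ^ 2 ≤ 28 * Δ ^ 4 * f := by
  have htM1 : 1 ≤ t * M := by rw [htM]; nlinarith
  have hM100 : 100 ≤ M := by
    have : t * M ≤ 1 / 100 * M := mul_le_mul_of_nonneg_right ht hM.le
    linarith
  have hMM : (M - 1) * (M - 3) ≤ M ^ 2 := by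
    have : (M - 1) * (M - 3) = M ^ 2 - 4 * M + 3 := by ring
    linarith
  have m1 : (1 - t) * M ≤ M - 1 := by linarith
  have m3 : (1 - 3 * t) * M ≤ M - 3 := by linarith
  have m5 : (1 - 5 * t) * M ≤ M - 5 := by linarith
  have hkf : 0 ≤ k * f := mul_nonneg hk hf
  have hmkf : 0 ≤ m2 * (k * f) := mul_nonneg hm2 hkf
  have a1 : (1 - 4 * t) * (k * f) ≤ M * C := by nlinarith
  have a2 : M * C ≤ (1 + 6 * t) * (k * f) := by
    have b0 : (1 - t) * M * C ≤ (M - 1) * C := mul_le_mul_of_nonneg_right m1 hC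
    have b1 : (1 - 5 * t) * (M * C) ≤ k * f := by
      refine le_trans ?_ (le_trans (mul_le_mul_of_nonneg_left b0 (by linarith : 0 ≤ 1 - 4 * t)) h2)
      have : 0 ≤ M * C := by positivity
      nlinarith [mul_nonneg (mul_nonneg ht0.le ht0.le) this]
    have b2 : 1 ≤ (1 + 6 * t) * (1 - 5 * t) := by nlinarith
    have : 0 ≤ M * C := by positivity
    calc M * C ≤ ((1 + 6 * t) * (1 - 5 * t)) * (M * C) := by nlinarith
      _ = (1 + 6 * t) * ((1 - 5 * t) * (M * C)) := by ring
      _ ≤ _ := mul_le_mul_of_nonneg_left b1 (by linarith)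
  have m13 : (1 - t) * (1 - 3 * t) * M ^ 2 ≤ (M - 1) * (M - 3) := by
    calc (1 - t) * (1 - 3 * t) * M ^ 2 = ((1 - t) * M) * ((1 - 3 * t) * M) := by ring
      _ ≤ _ := mul_le_mul m1 m3 (mul_nonneg (by linarith) hM.le) (by linarith)
  have m35 : (1 - 3 * t) * (1 - 5 * t) * M ^ 2 ≤ (M - 3) * (M - 5) := by
    calc (1 - 3 * t) * (1 - 5 * t) * M ^ 2 = ((1 - 3 * t) * M) * ((1 - 5 * t) * M) := by ring
      _ ≤ _ := mul_le_mul m3 m5 (mul_nonneg (by linarith) hM.le) (by linarith)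
  have q1 : 0 ≤ 1 - 4 * t := by linarith
  have x1 : (1 - 8 * t) * (m2 * (k * f)) ≤ M ^ 2 * X := by
    calc (1 - 8 * t) * (m2 * (k * f)) ≤ (1 - 4 * t) ^ 2 * (m2 * (k * f)) := by
          apply mul_le_mul_of_nonneg_right _ hmkf; nlinarith
      _ ≤ (1 - 4 * t) ^ 2 * (m2 * F) := by
          apply mul_le_mul_of_nonneg_left _ (by positivity)
          exact mul_le_mul_of_nonneg_left h4 hm2
      _ ≤ (M - 1) * (M - 3) * X := h5
      _ ≤ M ^ 2 * X := by
          apply mul_le_mul_of_nonneg_right _ hX; linarith [hMM]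
  have x2 : M ^ 2 * X ≤ (1 + 20 * t) * (m2 * (k * f)) := by
    have hMX : 0 ≤ M ^ 2 * X := by positivity
    have c1 : (1 - 16 * t) ≤ (1 - 4 * t) ^ 3 * ((1 - t) * (1 - 3 * t)) := by
      have d1 : 1 - 12 * t ≤ (1 - 4 * t) ^ 3 := by nlinarith [mul_pos ht0 ht0, pow_pos ht0 3]
      have d2 : 1 - 4 * t ≤ (1 - t) * (1 - 3 * t) := by nlinarith
      calc 1 - 16 * t ≤ (1 - 12 * t) * (1 - 4 * t) := by nlinarith
        _ ≤ _ := mul_le_mul d1 d2 q1 (by positivity)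
    have b1 : (1 - 16 * t) * (M ^ 2 * X) ≤ m2 * (k * f) := by
      calc (1 - 16 * t) * (M ^ 2 * X) ≤ (1 - 4 * t) ^ 3 * ((1 - t) * (1 - 3 * t)) * (M ^ 2 * X) :=
            mul_le_mul_of_nonneg_right c1 hMX
        _ = (1 - 4 * t) ^ 3 * ((1 - t) * (1 - 3 * t) * M ^ 2 * X) := by ring
        _ ≤ (1 - 4 * t) ^ 3 * ((M - 1) * (M - 3) * X) := by
            apply mul_le_mul_of_nonneg_left _ (by positivity)
            exact mul_le_mul_of_nonneg_right m13 hX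
        _ = (1 - 4 * t) * ((1 - 4 * t) ^ 2 * ((M - 1) * (M - 3) * X)) := by ring
        _ ≤ (1 - 4 * t) * (m2 * F) := mul_le_mul_of_nonneg_left h6 q1
        _ = m2 * ((1 - 4 * t) * F) := by ring
        _ ≤ _ := mul_le_mul_of_nonneg_left h3 hm2
    have b2 : 1 ≤ (1 + 20 * t) * (1 - 16 * t) := by nlinarith
    calc M ^ 2 * X ≤ ((1 + 20 * t) * (1 - 16 * t)) * (M ^ 2 * X) := by nlinarith
      _ = (1 + 20 * t) * ((1 - 16 * t) * (M ^ 2 * X)) := by ring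
      _ ≤ _ := mul_le_mul_of_nonneg_left b1 (by linarith)
  have y1 : M ^ 2 * Y ≤ 2 * Δ ^ 3 * (k * f) := by
    have hMY : 0 ≤ M ^ 2 * Y := by positivity
    have c1 : 1 / 2 ≤ (1 - 4 * t) ^ 4 * ((1 - 3 * t) * (1 - 5 * t)) := by
      have d0 : 1 - 8 * t ≤ (1 - 4 * t) ^ 2 := by nlinarith
      have d1 : 1 - 16 * t ≤ (1 - 4 * t) ^ 4 := by nlinarith
      have d2 : 1 - 8 * t ≤ (1 - 3 * t) * (1 - 5 * t) := by nlinarith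
      calc 1 / 2 ≤ (1 - 16 * t) * (1 - 8 * t) := by nlinarith
        _ ≤ _ := mul_le_mul d1 d2 (by linarith) (by positivity)
    have b1 : 1 / 2 * (M ^ 2 * Y) ≤ Δ ^ 3 * (k * f) := by
      calc 1 / 2 * (M ^ 2 * Y) ≤ (1 - 4 * t) ^ 4 * ((1 - 3 * t) * (1 - 5 * t)) * (M ^ 2 * Y) :=
            mul_le_mul_of_nonneg_right c1 hMY
        _ = (1 - 4 * t) ^ 4 * ((1 - 3 * t) * (1 - 5 * t) * M ^ 2 * Y) := by ring
        _ ≤ (1 - 4 * t) ^ 4 * ((M - 3) * (M - 5) * Y) := by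
            apply mul_le_mul_of_nonneg_left _ (by positivity)
            exact mul_le_mul_of_nonneg_right m35 hY
        _ = (1 - 4 * t) * ((1 - 4 * t) ^ 3 * ((M - 3) * (M - 5) * Y)) := by ring
        _ ≤ (1 - 4 * t) * (Δ ^ 3 * F) := mul_le_mul_of_nonneg_left h7 q1
        _ = Δ ^ 3 * ((1 - 4 * t) * F) := by ring
        _ ≤ _ := mul_le_mul_of_nonneg_left h3 (by positivity)
    linarith
  have hkfΔ : k * f ≤ Δ * f := mul_le_mul_of_nonneg_right hkΔ hf
  have z1 : t * M * (k * f) ≤ Δ ^ 2 * (Δ * f) := by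
    rw [htM]; exact mul_le_mul_of_nonneg_left hkfΔ (by positivity)
  have z2 : t * (m2 * (k * f)) ≤ Δ ^ 3 * (Δ * f) := by
    calc t * (m2 * (k * f)) ≤ t * ((Δ * M) * (k * f)) := by
          apply mul_le_mul_of_nonneg_left _ ht0.le
          exact mul_le_mul_of_nonneg_right hm2' hkf
      _ = Δ * (t * M * (k * f)) := by ring
      _ ≤ Δ * (Δ ^ 2 * (Δ * f)) := mul_le_mul_of_nonneg_left z1 (by linarith)
      _ = _ := by ring
  have z3 : Δ ^ 3 * (k * f) ≤ Δ ^ 3 * (Δ * f) := mul_le_mul_of_nonneg_left hkfΔ (by positivity)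
  have z4 : Δ ^ 2 * (Δ * f) ≤ Δ ^ 3 * (Δ * f) := by
    apply mul_le_mul_of_nonneg_right _ (by positivity)
    nlinarith [sq_nonneg Δ]
  have hM2 : 0 < M ^ 2 := by positivity
  have hfin : |M * (M * C) + M ^ 2 * X - M ^ 2 * Y - M * (k * f) - m2 * (k * f)| ≤ 28 * Δ ^ 4 * f := by
    have w1 : M * ((1 - 4 * t) * (k * f)) ≤ M * (M * C) := mul_le_mul_of_nonneg_left a1 hM.le
    have w2 : M * (M * C) ≤ M * ((1 + 6 * t) * (k * f)) := mul_le_mul_of_nonneg_left a2 hM.le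
    have w3 : 0 ≤ M ^ 2 * Y := by positivity
    have w4 : 0 ≤ Δ ^ 3 * (Δ * f) := by positivity
    rw [abs_le]
    constructor <;> linarith
  calc |C + X - Y - f * (k / M + k * m2 / M ^ 2)| * M ^ 2
      = |(C + X - Y - f * (k / M + k * m2 / M ^ 2)) * M ^ 2| := by rw [abs_mul, abs_of_pos hM2]
    _ = |M * (M * C) + M ^ 2 * X - M ^ 2 * Y - M * (k * f) - m2 * (k * f)| := by
        congr 1; field_simp; ring
    _ ≤ _ := hfin

end comb3

section comb4
variable {V : Type*} [Fintype V] [DecidableEq V]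

lemma theta_ok (Δ M : ℝ) (hΔ : 1 ≤ Δ) (hM : 100 * Δ ^ 2 ≤ M) :
    0 < Δ ^ 2 / M ∧ Δ ^ 2 / M ≤ 1 / 100 ∧ Δ ^ 2 / M * M = Δ ^ 2 ∧ 100 ≤ M ∧
    2 * Δ ^ 2 ≤ 4 * (Δ ^ 2 / M) * ((M - 6) - 3 * Δ ^ 2) := by
  have h1 : 1 ≤ Δ ^ 2 := by nlinarith
  have hM0 : 0 < M := by linarith
  have h2 : Δ ^ 2 / M ≤ 1 / 100 := by
    rw [div_le_div_iff₀ hM0 (by norm_num)]; linarith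
  have h3 : Δ ^ 2 / M * M = Δ ^ 2 := by field_simp
  have h0 : 0 < Δ ^ 2 / M := by positivity
  refine ⟨h0, h2, h3, by linarith, ?_⟩
  set t := Δ ^ 2 / M
  have h4 : t * Δ ^ 2 ≤ 1 / 100 * Δ ^ 2 := mul_le_mul_of_nonneg_right h2 (by linarith)
  nlinarith

lemma step_est (e : V → ℤ) {a l z : V} (haz : a ≠ z) (hlz : l ≠ z) (hal : a ≠ l)
    (he : ∀ v, 0 ≤ e v) (Δ : ℤ) (hΔ : 1 ≤ Δ) (hd : ∀ v, e v ≤ Δ) (hl : e l = 1) (hz : e z = 0)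
    (M : ℝ) (hsum : ((∑ v, e v : ℤ) : ℝ) = M) (hM : 100 * (Δ:ℝ) ^ 2 ≤ M) :
    |BB e l a - ff e * ((e a : ℝ) / M + (e a : ℝ) * (∑ u ∈ univ.erase a, (e u : ℝ) * (e u - 1)) / M ^ 2)|
      * M ^ 2 ≤ 28 * (Δ:ℝ) ^ 4 * ff e := by
  have hΔ' : (1:ℝ) ≤ Δ := by exact_mod_cast hΔ
  obtain ⟨ht0, ht1, htM, hM100, hS⟩ := theta_ok Δ M hΔ' hM
  set t := (Δ:ℝ) ^ 2 / M with htdef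
  set S := M - 6 with hSdef
  have hθ : 0 < 4 * t := by linarith
  have hθ1 : 4 * t < 1 := by linarith
  set D := e - ee a + ee z with hD
  have hDl : D l = 1 := by simp [hD, hl, hlz, hal.symm]
  have hDz : D z = 1 := by simp [hD, hz, haz.symm]
  have hDd : ∀ v, D v ≤ Δ := add_ee_le hΔ (sub_ee_le hd a) z (by simp [hz, haz.symm])
  have hDsum : ((∑ v, D v : ℤ) : ℝ) = M := by
    rw [hD, sum_add_ee, sum_sub_ee, ← hsum]; push_cast; ring
  have hm2 : ∑ u ∈ univ.erase a, (e u : ℝ) * (e u - 1) = ∑ u ∈ univ.erase a, (D u : ℝ) * (D u - 1) := by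
    apply Finset.sum_congr rfl
    intro u hu
    have hua : u ≠ a := (Finset.mem_erase.1 hu).1
    by_cases huz : u = z
    · subst huz; rw [hz, hDz]; simp
    · have : D u = e u := by simp [hD, hua, huz]
      rw [this]
  have hBB : BB e l a = cnt e (fun E => s(l,a) ∈ E) + ∑ u ∈ univ.erase a, XX D l z u
      - ∑ u ∈ univ.erase a, YY D l z a u := by
    rw [BB_eq, ← Finset.add_sum_erase _ _ (mem_univ a), W_self, zero_add, add_sub_assoc,
      ← Finset.sum_sub_distrib]
    congr 1
    apply Finset.sum_congr rfl
    intro u hu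
    have := W_eq e haz hlz hal hz (Finset.mem_erase.1 hu).1
    rw [← this]; ring
  have hC := leaf_prob (e - ee l) (l := l) (by simp [hl]) Δ hΔ (sub_ee_le hd l) S (4*t) hθ hS
    (by rw [sum_sub_ee]; push_cast; push_cast at hsum; linarith) a
  rw [sum_sub_ee, sub_add_cancel, ← leaf_toggle' e hal.symm hl] at hC
  have e1 : (e - ee l) a = e a := by simp [hal]
  rw [e1] at hC
  push_cast at hC hsum
  rw [hsum] at hC
  have hF := F_bound e haz hz Δ hΔ hd S (4*t) hθ hS (by push_cast; rw [hsum]; linarith)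
  have hX := fun u => X_bound D u hlz hDl hDz Δ hΔ hDd S (4*t) M hθ hθ1 hS hDsum (by linarith) (by linarith)
  have hY := fun u => Y_bound D hlz haz hal hDl hDz Δ hΔ hDd S (4*t) M hθ hθ1 hS hDsum (by linarith) (by linarith) u
  rw [hBB]
  refine num_step M Δ (e a) _ t (ff e) (ff D) _ _ _ ht0 ht1 (by linarith) htM hΔ' (by exact_mod_cast he a)
    (by exact_mod_cast hd a) ?_ ?_ (ff_nonneg _) (ff_nonneg _) (cnt_nonneg _ _)
    (Finset.sum_nonneg fun u _ => cnt_nonneg _ _) (Finset.sum_nonneg fun u _ => cnt_nonneg _ _)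
    hC.1 hC.2 hF.1 hF.2 ?_ ?_ ?_
  · apply Finset.sum_nonneg
    intro u _
    rcases eq_or_lt_of_le (he u) with h | h
    · rw [← h]; simp
    · have h1 : (1:ℝ) ≤ e u := by exact_mod_cast h
      exact mul_nonneg (by linarith) (by linarith)
  · rw [← hsum, Finset.mul_sum]
    calc ∑ u ∈ univ.erase a, (e u : ℝ) * (e u - 1) ≤ ∑ u ∈ univ.erase a, (Δ:ℝ) * e u := by
          apply Finset.sum_le_sum
          intro u _
          have h0 : (0:ℝ) ≤ e u := by exact_mod_cast he u
          have h1 : (e u:ℝ) ≤ Δ := by exact_mod_cast hd u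
          nlinarith
      _ ≤ _ := by
          apply Finset.sum_le_sum_of_subset_of_nonneg (Finset.erase_subset _ _)
          intro u _ _
          have h0 : (0:ℝ) ≤ e u := by exact_mod_cast he u
          positivity
  · rw [hm2, Finset.sum_mul, Finset.mul_sum, Finset.mul_sum]
    exact Finset.sum_le_sum fun u _ => (hX u).1
  · rw [hm2, Finset.sum_mul, Finset.mul_sum, Finset.mul_sum]
    exact Finset.sum_le_sum fun u _ => (hX u).2
  · rw [Finset.mul_sum, Finset.mul_sum]
    calc _ ≤ ∑ u ∈ univ.erase a, (Δ:ℝ) ^ 3 * ff (D - ee z - ee u) := Finset.sum_le_sum fun u _ => hY u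
      _ ≤ ∑ u, (Δ:ℝ) ^ 3 * ff (D - ee z - ee u) := by
          apply Finset.sum_le_sum_of_subset_of_nonneg (Finset.erase_subset _ _)
          intro u _ _
          exact mul_nonneg (by positivity) (ff_nonneg _)
      _ = (Δ:ℝ) ^ 3 * ff D := by
          rw [← Finset.mul_sum, ← leaf_sum (D - ee z) (l := z) (by simp [hDz]), sub_add_cancel]

end comb4

section comb5
variable {V : Type*} [Fintype V] [DecidableEq V]

lemma split_apply (d : V → ℤ) {a l : V} (hal : a ≠ l) (hl : d l = 0) (u : V) :
    (d - ee a + ee l) u = if u = a then d a - 1 else if u = l then 1 else d u := by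
  simp only [Pi.add_apply, Pi.sub_apply, ee_apply]
  by_cases h1 : u = a
  · subst h1; simp [hal]
  · by_cases h2 : u = l
    · subst h2; simp [h1, hl]
    · simp [h1, h2]

lemma sum_split {R : Type*} [AddCommGroup R] (g : ℤ → R) (d : V → ℤ) {a l : V} (hal : a ≠ l)
    (hl : d l = 0) :
    ∑ u, g ((d - ee a + ee l) u) = ∑ u, g (d u) + (g (d a - 1) - g (d a)) + (g 1 - g 0) := by
  have h : ∀ u, g ((d - ee a + ee l) u) = g (d u) + (if u = a then (g (d a - 1) - g (d a)) else 0)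
      + (if u = l then (g 1 - g 0) else 0) := by
    intro u
    rw [split_apply d hal hl]
    by_cases h1 : u = a
    · subst h1; simp [hal]
    · by_cases h2 : u = l
      · subst h2; simp [h1, hl]
      · simp [h1, h2]
  simp_rw [h, Finset.sum_add_distrib]
  simp

lemma prod_split (d : V → ℤ) {a l : V} (hal : a ≠ l) (hl : d l = 0) (ha : 1 ≤ d a) :
    ∏ u, (((d u).toNat.factorial : ℕ) : ℝ) =
      d a * ∏ u, ((((d - ee a + ee l) u).toNat.factorial : ℕ) : ℝ) := by
  have h : ∀ u, (((d u).toNat.factorial : ℕ) : ℝ) = (if u = a then (d a : ℝ) else 1) *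
      ((((d - ee a + ee l) u).toNat.factorial : ℕ) : ℝ) := by
    intro u
    rw [split_apply d hal hl]
    by_cases h1 : u = a
    · subst h1
      simp only [if_true]
      obtain ⟨k, hk⟩ : ∃ k : ℕ, d u = k + 1 := ⟨(d u - 1).toNat, by omega⟩
      have e1 : (d u).toNat = k + 1 := by omega
      have e2 : (d u - 1).toNat = k := by omega
      rw [e1, e2, Nat.factorial_succ, hk]; push_cast; ring
    · by_cases h2 : u = l
      · subst h2; simp [h1, hl]
      · simp [h1, h2]
  rw [Finset.prod_congr rfl fun u _ => h u, Finset.prod_mul_distrib]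
  simp

lemma ff_zero : ff (0 : V → ℤ) = 1 := by
  unfold ff
  have : RR (0 : V → ℤ) = {∅} := by
    ext E
    rw [Finset.mem_singleton]
    constructor
    · intro hE
      apply Finset.eq_empty_of_forall_notMem
      intro x
      induction x using Sym2.ind with
      | _ u v => exact RR_nadj hE (le_refl 0) v
    · rintro rfl
      simp [mem_RR, dg]
  rw [this]; simp

lemma ff_match (m : ℕ) : ∀ d : V → ℤ, (∀ v, 0 ≤ d v) → (∀ v, d v ≤ 1) → ∑ v, d v = 2 * m →
    ff d = (((2 * m - 1).doubleFactorial : ℕ) : ℝ) := by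
  induction m with
  | zero =>
    intro d h0 _ hs
    have : d = 0 := by
      funext v
      have := (Finset.sum_eq_zero_iff_of_nonneg (fun v _ => h0 v)).1 (by simpa using hs) v (mem_univ v)
      simpa using this
    rw [this, ff_zero]; simp
  | succ m ih =>
    intro d h0 h1 hs
    have : ∃ l, d l = 1 := by
      by_contra hc
      push Not at hc
      have : ∑ v, d v = 0 := Finset.sum_eq_zero fun v _ => by
        have := h0 v; have := h1 v; have := hc v; omega
      rw [this] at hs; push_cast at hs; omega
    obtain ⟨l, hl⟩ := this
    set c := d - ee l with hc
    have hcs : ∑ v, c v = 2 * m + 1 := by rw [hc, sum_sub_ee, hs]; push_cast; ring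
    have hcl : c l = 0 := by simp [hc, hl]
    have hc0 : ∀ v, 0 ≤ c v := by
      intro v
      by_cases hv : v = l
      · subst hv; omega
      · have : c v = d v := by simp [hc, hv]
        rw [this]; exact h0 v
    have hc1 : ∀ v, c v ≤ 1 := sub_ee_le h1 l
    have hdc : d = c + ee l := by rw [hc]; abel
    rw [hdc, leaf_sum c hcl]
    have key : ∀ u, ff (c - ee u) = (c u : ℝ) * (((2 * m - 1).doubleFactorial : ℕ) : ℝ) := by
      intro u
      have := hc0 u
      have := hc1 u
      have hu : c u = 0 ∨ c u = 1 := by omega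
      rcases hu with hu | hu
      · rw [hu, ff_eq_zero_of_neg (v := u)]; simp
        simp [hu]
      · rw [hu, ih (c - ee u)]; simp
        · intro v
          by_cases hv : v = u
          · subst hv; simp [hu]
          · simpa [hv] using hc0 v
        · exact sub_ee_le hc1 u
        · rw [sum_sub_ee, hcs]; ring
    rw [Finset.sum_congr rfl fun u _ => key u, ← Finset.sum_mul]
    have hr : (∑ u, (c u : ℝ)) = 2 * m + 1 := by exact_mod_cast hcs
    rw [hr]
    have e1 : 2 * (m + 1) - 1 = 2 * m + 1 := by omega
    rw [e1]
    rcases m with _ | m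
    · simp
    · have e2 : 2 * (m + 1) + 1 = (2 * (m + 1) - 1) + 2 := by omega
      rw [e2, Nat.doubleFactorial_add_two]
      push_cast
      have e3 : ((2 * (m + 1) - 1 : ℕ) : ℝ) + 2 = 2 * (m + 1) + 1 := by
        rw [show 2 * (m + 1) - 1 = 2 * m + 1 by omega]; push_cast; ring
      rw [e3]

lemma log_est (p : ℝ) (h0 : 0 ≤ p) (h1 : p ≤ 1 / 2) : ∃ r, |r| ≤ p ^ 2 ∧ 1 - p = Real.exp (-p + r) := by
  refine ⟨Real.log (1 - p) + p, ?_, ?_⟩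
  · have h2 : Real.log (1 - p) ≤ -p := by
      have := Real.log_le_sub_one_of_pos (x := 1 - p) (by linarith); linarith
    have h3 : - p - p ^ 2 ≤ Real.log (1 - p) := by
      have h4 := Real.one_sub_inv_le_log_of_pos (x := 1 - p) (by linarith)
      have hp : 0 < 1 - p := by linarith
      have hab := Real.abs_log_sub_add_sum_range_le (x := p) (by rw [abs_of_nonneg h0]; linarith) 1
      rw [abs_of_nonneg h0] at hab
      simp at hab
      have h5 : p ^ 2 / (1 - p) ≤ 2 * p ^ 2 := by
        rw [div_le_iff₀ hp]; nlinarith [sq_nonneg p]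
      rw [Real.le_log_iff_exp_le hp]
      have h6 : Real.exp (-(p + p ^ 2)) = (Real.exp (p + p ^ 2))⁻¹ := Real.exp_neg _
      rw [show -p - p ^ 2 = -(p + p ^ 2) by ring, h6, inv_le_comm₀ (Real.exp_pos _) hp]
      have h7 := Real.quadratic_le_exp_of_nonneg (x := p + p ^ 2) (by positivity)
      refine le_trans ?_ h7
      rw [inv_le_iff_one_le_mul₀ hp]
      nlinarith [pow_nonneg h0 3, pow_nonneg h0 4, pow_nonneg h0 5, sq_nonneg p, mul_nonneg (sq_nonneg p) (by linarith : 0 ≤ 1/2 - p), mul_nonneg (pow_nonneg h0 3) (by linarith : 0 ≤ 1/2 - p), mul_nonneg (pow_nonneg h0 4) (by linarith : 0 ≤ 1/2 - p)]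
    rw [abs_le]; constructor <;> nlinarith [sq_nonneg p]
  · rw [neg_add_eq_sub, add_sub_cancel_right, Real.exp_log (by linarith)]

end comb5

section comb6
variable {V : Type*} [Fintype V] [DecidableEq V]

def TT (d : V → ℤ) : ℝ := ∑ u, (d u : ℝ) * (d u - 1)
def Phi (d : V → ℤ) (M : ℝ) : ℝ := TT d / (2 * M) + (TT d / (2 * M)) ^ 2

lemma num_step2 (M Δ k T f B : ℝ) (hM : 100 * Δ ^ 2 ≤ M) (hΔ : 1 ≤ Δ) (hk : 0 ≤ k) (hkΔ : k ≤ Δ)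
    (hf : 0 < f) (hB0 : 0 ≤ B) (hB : B ≤ 4 * (Δ ^ 2 / M) * f)
    (h : |B - f * (k / M + k * (T - k * (k - 1)) / M ^ 2)| * M ^ 2 ≤ 28 * Δ ^ 4 * f) :
    ∃ r, |r| ≤ 45 * Δ ^ 4 / M ^ 2 ∧
      f - B = f * Real.exp (-(k / M + k * T / M ^ 2 + k ^ 2 / M ^ 2) + r) := by
  obtain ⟨ht0, ht1, htM, hM100, hS⟩ := theta_ok Δ M hΔ hM
  have hM0 : 0 < M := by linarith
  have hp0 : 0 ≤ B / f := by positivity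
  have hp1 : B / f ≤ 4 * (Δ ^ 2 / M) := by rwa [div_le_iff₀ hf]
  obtain ⟨s, hs, hse⟩ := log_est (B / f) hp0 (by linarith)
  have hs2 : |s| ≤ 16 * Δ ^ 4 / M ^ 2 := by
    refine hs.trans ?_
    calc (B / f) ^ 2 ≤ (4 * (Δ ^ 2 / M)) ^ 2 := pow_le_pow_left₀ hp0 hp1 2
      _ = _ := by ring
  have hq : |B / f - (k / M + k * (T - k * (k - 1)) / M ^ 2)| ≤ 28 * Δ ^ 4 / M ^ 2 := by
    have e1 : B / f - (k / M + k * (T - k * (k - 1)) / M ^ 2) =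
      (B - f * (k / M + k * (T - k * (k - 1)) / M ^ 2)) / f := by field_simp
    rw [e1, abs_div, abs_of_pos hf, div_le_div_iff₀ hf (by positivity)]
    exact h
  have hk3 : k ^ 3 / M ^ 2 ≤ Δ ^ 4 / M ^ 2 := by
    apply div_le_div_of_nonneg_right _ (by positivity)
    calc k ^ 3 ≤ Δ ^ 3 := pow_le_pow_left₀ hk hkΔ 3
      _ ≤ Δ ^ 4 := pow_le_pow_right₀ hΔ (by norm_num)
  have hk30 : 0 ≤ k ^ 3 / M ^ 2 := by positivity
  refine ⟨s + (k ^ 3 / M ^ 2 - (B / f - (k / M + k * (T - k * (k - 1)) / M ^ 2))), ?_, ?_⟩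
  · have e2 : 45 * Δ ^ 4 / M ^ 2 = 16 * Δ ^ 4 / M ^ 2 + (28 * Δ ^ 4 / M ^ 2 + Δ ^ 4 / M ^ 2) := by ring
    rw [e2]
    rw [abs_le] at hs2 hq ⊢
    constructor <;> linarith [hs2.1, hs2.2, hq.1, hq.2]
  · have e3 : -(k / M + k * T / M ^ 2 + k ^ 2 / M ^ 2) +
      (s + (k ^ 3 / M ^ 2 - (B / f - (k / M + k * (T - k * (k - 1)) / M ^ 2)))) = -(B / f) + s := by ring
    rw [e3, ← hse]; field_simp

theorem ff_main (Δ : ℤ) (hΔ : 1 ≤ Δ) (m : ℕ) (hM : 100 * (Δ:ℝ) ^ 2 ≤ 2 * m) (x : ℕ) :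
    ∀ d : V → ℤ, (∀ v, 0 ≤ d v) → (∀ v, d v ≤ Δ) → ∑ v, d v = 2 * m →
    ∑ v, ((d v).toNat - 1) = x → x < (univ.filter (fun v => d v = 0)).card →
    ∃ r : ℝ, |r| ≤ x * (45 * (Δ:ℝ) ^ 4 / (2 * m) ^ 2) ∧
      ff d * ∏ u, (((d u).toNat.factorial : ℕ) : ℝ) =
        (((2 * m - 1).doubleFactorial : ℕ) : ℝ) * Real.exp (- Phi d (2 * m) + r) := by
  have hΔ' : (1:ℝ) ≤ Δ := by exact_mod_cast hΔ
  have hM0 : (0:ℝ) < 2 * m := by nlinarith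
  induction x with
  | zero =>
    intro d h0 hd hs hx _
    have h1 : ∀ v, d v ≤ 1 := by
      intro v
      have := (Finset.sum_eq_zero_iff.1 hx) v (mem_univ v)
      omega
    refine ⟨0, by simp, ?_⟩
    rw [ff_match m d h0 h1 hs]
    have hT : TT d = 0 := by
      apply Finset.sum_eq_zero
      intro v _
      have := h0 v; have := h1 v
      rcases (by omega : d v = 0 ∨ d v = 1) with h | h <;> simp [h]
    have hp : ∏ u, (((d u).toNat.factorial : ℕ) : ℝ) = 1 := by
      apply Finset.prod_eq_one
      intro v _
      have := h0 v; have := h1 v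
      rcases (by omega : d v = 0 ∨ d v = 1) with h | h <;> simp [h]
    rw [hp, Phi, hT]; simp
  | succ x ih =>
    intro d h0 hd hs hx hz
    have : ∃ a, 2 ≤ d a := by
      by_contra hc
      push Not at hc
      have : ∑ v, ((d v).toNat - 1) = 0 := Finset.sum_eq_zero fun v _ => by
        have := hc v; omega
      omega
    obtain ⟨a, ha⟩ := this
    obtain ⟨l, hl, z, hz', hlz⟩ := Finset.one_lt_card.1 (by omega : 1 < (univ.filter (fun v => d v = 0)).card)
    simp only [Finset.mem_filter, mem_univ, true_and] at hl hz'
    have hal : a ≠ l := by rintro rfl; omega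
    have haz : a ≠ z := by rintro rfl; omega
    set e := d - ee a + ee l with he
    have hsp := split_apply d hal hl
    rw [← he] at hsp
    have hea : e a = d a - 1 := by rw [hsp]; simp
    have hel : e l = 1 := by rw [hsp]; simp [hal.symm]
    have hez : e z = 0 := by rw [hsp]; simp [haz.symm, hlz.symm, hz']
    have he0 : ∀ v, 0 ≤ e v := by
      intro v; rw [hsp]; have := h0 v; split_ifs <;> omega
    have hed : ∀ v, e v ≤ Δ := by
      intro v; rw [hsp]; have := hd v; have := hd a; split_ifs <;> omega
    have hes : ∑ v, e v = 2 * m := by rw [he, sum_add_ee, sum_sub_ee, hs]; ring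
    have hex : ∑ v, ((e v).toNat - 1) = x := by
      have h1 := sum_split (fun t : ℤ => ((t.toNat - 1 : ℕ) : ℤ)) d hal hl
      rw [← he] at h1
      have h2 : ((∑ v, ((d v).toNat - 1) : ℕ) : ℤ) = x + 1 := by rw [hx]; push_cast; rfl
      push_cast at h2
      have h3 : ((∑ v, ((e v).toNat - 1) : ℕ) : ℤ) = x := by
        push_cast
        rw [h1, h2]
        have e1 : (((d a - 1).toNat - 1 : ℕ) : ℤ) - (((d a).toNat - 1 : ℕ) : ℤ) = -1 := by omega
        rw [e1]; simp
      exact_mod_cast h3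
    have hzc : x < (univ.filter (fun v => e v = 0)).card := by
      have hsub : (univ.filter (fun v => d v = 0)).erase l ⊆ univ.filter (fun v => e v = 0) := by
        intro v hv
        simp only [Finset.mem_erase, Finset.mem_filter, mem_univ, true_and] at hv ⊢
        rw [hsp]
        have : v ≠ a := by rintro rfl; omega
        simp [this, hv.1, hv.2]
      have h1 := Finset.card_le_card hsub
      rw [Finset.card_erase_of_mem (by simp [hl])] at h1
      omega
    obtain ⟨r, hr, hre⟩ := ih e he0 hed hes hex hzc
    have hfe : 0 < ff e := by
      rcases (ff_nonneg e).eq_or_lt with h | h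
      · exfalso
        rw [← h, zero_mul] at hre
        have : 0 < (((2 * m - 1).doubleFactorial : ℕ) : ℝ) * Real.exp (- Phi e (2 * m) + r) := by
          have := Nat.doubleFactorial_pos (2 * m - 1)
          positivity
        linarith
      · exact h
    have hesR : ((∑ v, e v : ℤ) : ℝ) = 2 * m := by rw [hes]; push_cast; ring
    have hst := step_est e haz hlz hal he0 Δ hΔ hed hel hez (2 * m) hesR hM
    obtain ⟨ht0, ht1, htM, hM100, hS⟩ := theta_ok Δ (2 * m) hΔ' hM
    have hcr := crude' e hal hel Δ hΔ hed _ _ (by linarith) hS (by rw [hesR]; linarith)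
    have hT : ∑ u ∈ univ.erase a, (e u : ℝ) * (e u - 1) = TT e - (e a : ℝ) * (e a - 1) := by
      rw [TT, ← Finset.add_sum_erase _ _ (mem_univ a)]; ring
    rw [hT] at hst
    obtain ⟨s, hs', hse⟩ := num_step2 (2 * m) Δ (e a) (TT e) (ff e) (BB e l a) hM hΔ'
      (by exact_mod_cast he0 a) (by exact_mod_cast hed a) hfe (BB_nonneg _ _ _) hcr hst
    have hsplit := split_id d hal hl
    rw [← he, hse] at hsplit
    have hTd : TT e = TT d - 2 * e a := by
      have h1 := sum_split (fun t : ℤ => (t : ℝ) * (t - 1)) d hal hl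
      rw [← he] at h1
      rw [TT, TT, h1, hea]; push_cast; ring
    refine ⟨r + s, ?_, ?_⟩
    · calc |r + s| ≤ |r| + |s| := abs_add_le _ _
        _ ≤ x * (45 * (Δ:ℝ) ^ 4 / (2 * m) ^ 2) + 45 * (Δ:ℝ) ^ 4 / (2 * m) ^ 2 := add_le_add hr hs'
        _ = _ := by push_cast; ring
    · rw [prod_split d hal hl (by omega), ← he]
      calc ff d * (d a * ∏ u, (((e u).toNat.factorial : ℕ) : ℝ))
          = (d a * ff d) * ∏ u, (((e u).toNat.factorial : ℕ) : ℝ) := by ring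
        _ = (ff e * ∏ u, (((e u).toNat.factorial : ℕ) : ℝ)) * Real.exp (-((e a : ℝ) / (2 * m) + e a * TT e / (2 * m) ^ 2 + (e a : ℝ) ^ 2 / (2 * m) ^ 2) + s) := by
            rw [hsplit]; ring
        _ = _ := by
            rw [hre, mul_assoc, ← Real.exp_add]
            congr 2
            have : TT d = TT e + 2 * e a := by linarith
            rw [Phi, Phi, this]
            field_simp
            ring

end comb6

section transfer

lemma ff_transfer (n K : ℕ) (D : Fin n → ℕ) :
    ff (V := Fin n ⊕ Fin K) (Sum.elim (fun i => (D i : ℤ)) (fun _ => 0)) = (gcount n D : ℝ) := by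
  unfold ff gcount
  congr 1
  symm
  have hinj : Function.Injective (Sym2.map (Sum.inl : Fin n → Fin n ⊕ Fin K)) :=
    Sym2.map.injective Sum.inl_injective
  have hdl : ∀ (E : Finset (Sym2 (Fin n))) (i : Fin n),
      dg (E.map ⟨Sym2.map (Sum.inl : Fin n → Fin n ⊕ Fin K), hinj⟩) (Sum.inl i) = deg E i := by
    intro E i
    unfold dg deg
    rw [Finset.filter_map, Finset.card_map]
    congr 1
    apply Finset.filter_congr
    intro e _
    simp [Sym2.mem_map]
  have hdr : ∀ (E : Finset (Sym2 (Fin n))) (j : Fin K),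
      dg (E.map ⟨Sym2.map (Sum.inl : Fin n → Fin n ⊕ Fin K), hinj⟩) (Sum.inr j) = 0 := by
    intro E j
    unfold dg
    rw [Finset.card_eq_zero, Finset.filter_eq_empty_iff]
    intro e he
    simp only [Finset.mem_map, Function.Embedding.coeFn_mk] at he
    obtain ⟨e', _, rfl⟩ := he
    simp [Sym2.mem_map]
  have hdiag : ∀ e : Sym2 (Fin n), (Sym2.map (Sum.inl : Fin n → Fin n ⊕ Fin K) e).IsDiag ↔ e.IsDiag := by
    intro e
    induction e using Sym2.ind with
    | _ u v => simp
  apply Finset.card_bij (fun E _ => E.map ⟨Sym2.map Sum.inl, hinj⟩)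
  · intro E hE
    simp only [Finset.mem_filter, Graphs, mem_univ, true_and] at hE
    rw [mem_RR]
    refine ⟨?_, ?_⟩
    · intro e he
      simp only [Finset.mem_map, Function.Embedding.coeFn_mk] at he
      obtain ⟨e', he', rfl⟩ := he
      rw [hdiag]
      exact hE.1 e' he'
    · rintro (i | j)
      · rw [hdl, hE.2 i]; simp
      · rw [hdr]; simp
  · intro E _ E' _ h
    exact Finset.map_injective _ h
  · intro E hE
    have hmap : (univ.filter (fun e => Sym2.map (Sum.inl : Fin n → Fin n ⊕ Fin K) e ∈ E)).map
        ⟨Sym2.map Sum.inl, hinj⟩ = E := by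
      ext x
      simp only [Finset.mem_map, Finset.mem_filter, mem_univ, true_and, Function.Embedding.coeFn_mk]
      constructor
      · rintro ⟨e, he, rfl⟩; exact he
      · intro hx
        induction x using Sym2.ind with
        | _ u v =>
          rcases u with u | u
          · rcases v with v | v
            · exact ⟨s(u,v), by simpa using hx, by simp⟩
            · rw [Sym2.eq_swap] at hx
              exact absurd hx (RR_nadj hE (by simp) _)
          · exact absurd hx (RR_nadj hE (by simp) _)
    refine ⟨univ.filter (fun e => Sym2.map (Sum.inl : Fin n → Fin n ⊕ Fin K) e ∈ E), ?_, hmap⟩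
    rw [mem_RR] at hE
    simp only [Finset.mem_filter, Graphs, mem_univ, true_and]
    refine ⟨?_, ?_⟩
    · intro e he
      rw [← hdiag]; exact hE.1 _ he
    · intro i
      rw [← hdl, hmap]
      have := hE.2 (Sum.inl i)
      simp only [Sum.elim_inl] at this
      exact_mod_cast this

theorem gcount_main (n m : ℕ) (D : Fin n → ℕ) (Δ : ℕ) (hΔ : 1 ≤ Δ) (hD : ∀ i, D i ≤ Δ)
    (hs : ∑ i, D i = 2 * m) (hM : 100 * (Δ:ℝ) ^ 2 ≤ 2 * m) :
    ∃ r : ℝ, |r| ≤ 45 * (Δ:ℝ) ^ 4 / (2 * m) ∧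
      (gcount n D : ℝ) * ∏ i, ((D i).factorial : ℝ) = (((2 * m - 1).doubleFactorial : ℕ) : ℝ) *
        Real.exp (-((∑ i, (D i : ℝ) * (D i - 1)) / (2 * (2 * m)) +
          ((∑ i, (D i : ℝ) * (D i - 1)) / (2 * (2 * m))) ^ 2) + r) := by
  set d : Fin n ⊕ Fin (2 * m + 1) → ℤ := Sum.elim (fun i => (D i : ℤ)) (fun _ => 0) with hd
  have hΔ' : (1:ℝ) ≤ Δ := by exact_mod_cast hΔ
  have hM0 : (0:ℝ) < 2 * m := by nlinarith
  have hx : ∑ v, ((d v).toNat - 1) ≤ 2 * m := by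
    rw [Fintype.sum_sum_type]
    refine le_of_le_of_eq ?_ hs
    simp only [hd, Sum.elim_inl, Sum.elim_inr, Int.toNat_natCast, Int.toNat_zero]
    simp only [Nat.zero_sub, Finset.sum_const_zero, add_zero]
    exact Finset.sum_le_sum fun i _ => Nat.sub_le _ _
  have hz : 2 * m + 1 ≤ (univ.filter (fun v => d v = 0)).card := by
    have h1 : (univ : Finset (Fin (2 * m + 1))).map Function.Embedding.inr ⊆ univ.filter (fun v => d v = 0) := by
      intro v hv
      simp only [Finset.mem_map, mem_univ, true_and] at hv
      obtain ⟨j, rfl⟩ := hv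
      simp [hd]
    have := Finset.card_le_card h1
    simpa using this
  obtain ⟨r, hr, hre⟩ := ff_main (Δ := (Δ:ℤ)) (by exact_mod_cast hΔ) m (by push_cast; exact hM) _ d
    (by rintro (i | j) <;> simp [hd])
    (by rintro (i | j)
        · simp only [hd, Sum.elim_inl]; exact_mod_cast hD i
        · simp [hd])
    (by rw [Fintype.sum_sum_type]; simp only [hd, Sum.elim_inl, Sum.elim_inr]; simp; exact_mod_cast hs)
    rfl (by omega)
  refine ⟨r, ?_, ?_⟩
  · refine hr.trans ?_
    have h2 : ((∑ v, ((d v).toNat - 1) : ℕ) : ℝ) ≤ 2 * m := by exact_mod_cast hx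
    calc _ ≤ (2 * m : ℝ) * (45 * (Δ:ℝ) ^ 4 / (2 * m) ^ 2) := by
          push_cast at h2 ⊢
          apply mul_le_mul_of_nonneg_right h2 (by positivity)
      _ = _ := by field_simp
  · rw [hd, ff_transfer, ← hd] at hre
    have h3 : ∏ u, (((d u).toNat.factorial : ℕ) : ℝ) = ∏ i, ((D i).factorial : ℝ) := by
      rw [Fintype.prod_sum_type]; simp [hd]
    have h4 : TT d = ∑ i, (D i : ℝ) * (D i - 1) := by
      rw [TT, Fintype.sum_sum_type]; simp [hd]
    rw [h3, Phi, h4] at hre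
    exact hre

lemma handshake (n : ℕ) (E : Finset (Sym2 (Fin n))) (hE : ∀ e ∈ E, ¬ e.IsDiag) :
    ∑ i, deg E i = 2 * E.card := by
  unfold deg
  simp_rw [Finset.card_filter]
  rw [Finset.sum_comm, mul_comm, ← smul_eq_mul, ← Finset.sum_const]
  apply Finset.sum_congr rfl
  intro e he
  have h := hE e he
  rw [← Finset.card_filter]
  induction e using Sym2.ind with
  | _ u v =>
    have huv : u ≠ v := by simpa using h
    rw [← Finset.card_pair huv]
    congr 1
    ext i
    simp

lemma prG_eq (n m : ℕ) (D : Fin n → ℕ) (hs : ∑ i, D i = 2 * m) :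
    prG n m D = (gcount n D : ℝ) / (((n.choose 2).choose m : ℕ) : ℝ) := by
  unfold prG gcount
  have h1 : (Graphs n).filter (fun E => E.card = m ∧ ∀ i, deg E i = D i) =
      (Graphs n).filter (fun E => ∀ i, deg E i = D i) := by
    apply Finset.filter_congr
    intro E hE
    simp only [Graphs, Finset.mem_filter, mem_univ, true_and] at hE
    constructor
    · exact fun h => h.2
    · intro h
      refine ⟨?_, h⟩
      have := handshake n E hE
      rw [Finset.sum_congr rfl fun i _ => h i, hs] at this
      omega
  have h2 : (Graphs n).filter (fun E => E.card = m) =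
      Finset.powersetCard m (univ.filter (fun e : Sym2 (Fin n) => ¬ e.IsDiag)) := by
    ext E
    simp only [Graphs, Finset.mem_filter, mem_univ, true_and, Finset.mem_powersetCard,
      Finset.subset_iff]
  have h3 : (univ.filter (fun e : Sym2 (Fin n) => ¬ e.IsDiag)).card = n.choose 2 := by
    rw [← Fintype.card_subtype, Sym2.card_subtype_not_diag, Fintype.card_fin]
  rw [h1, h2, Finset.card_powersetCard, h3]

lemma dfact_choose (N m : ℕ) (h : m ≤ N) :
    (((2 * m - 1).doubleFactorial : ℕ) : ℝ) * ((2 * N).choose (2 * m) : ℝ) =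
      (N.choose m : ℝ) * ∏ k ∈ range m, (2 * (N:ℝ) - (2 * k + 1)) := by
  induction m with
  | zero => simp
  | succ m ih =>
    have ih := ih (by omega)
    have hd : (((2 * (m + 1) - 1).doubleFactorial : ℕ) : ℝ) =
        (2 * m + 1) * (((2 * m - 1).doubleFactorial : ℕ) : ℝ) := by
      rcases m with _ | m
      · simp
      · have e2 : 2 * (m + 1 + 1) - 1 = (2 * (m + 1) - 1) + 2 := by omega
        rw [e2, Nat.doubleFactorial_add_two]
        push_cast
        have e3 : ((2 * (m + 1) - 1 : ℕ) : ℝ) + 2 = 2 * (m + 1) + 1 := by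
          rw [show 2 * (m + 1) - 1 = 2 * m + 1 by omega]; push_cast; ring
        rw [e3]
    have c1 : ((2 * N).choose (2 * m + 1) : ℝ) * (2 * m + 1) = ((2 * N).choose (2 * m) : ℝ) * (2 * N - 2 * m) := by
      have := Nat.choose_succ_right_eq (2 * N) (2 * m)
      have h2 : ((2 * N - 2 * m : ℕ) : ℝ) = 2 * N - 2 * m := by
        rw [Nat.cast_sub (by omega)]; push_cast; ring
      rw [← h2]; exact_mod_cast this
    have c2 : ((2 * N).choose (2 * m + 2) : ℝ) * (2 * m + 2) = ((2 * N).choose (2 * m + 1) : ℝ) * (2 * N - (2 * m + 1)) := by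
      have := Nat.choose_succ_right_eq (2 * N) (2 * m + 1)
      have h2 : ((2 * N - (2 * m + 1) : ℕ) : ℝ) = 2 * N - (2 * m + 1) := by
        rw [Nat.cast_sub (by omega)]; push_cast; ring
      rw [← h2]; exact_mod_cast this
    have c3 : (N.choose (m + 1) : ℝ) * (m + 1) = (N.choose m : ℝ) * (N - m) := by
      have := Nat.choose_succ_right_eq N m
      have h2 : ((N - m : ℕ) : ℝ) = N - m := by
        rw [Nat.cast_sub (by omega)]
      rw [← h2]; exact_mod_cast this
    rw [hd, Finset.prod_range_succ, show 2 * (m + 1) = 2 * m + 2 by ring]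
    have hm : (2 * m + 2 : ℝ) ≠ 0 := by positivity
    apply mul_right_cancel₀ hm
    set P := ∏ k ∈ range m, (2 * (N:ℝ) - (2 * k + 1))
    calc _ = (2 * m + 1) * (((2 * m - 1).doubleFactorial : ℕ) : ℝ) * (((2 * N).choose (2 * m + 2) : ℝ) * (2 * m + 2)) := by ring
      _ = (((2 * N).choose (2 * m + 1) : ℝ) * (2 * m + 1)) * (((2 * m - 1).doubleFactorial : ℕ) : ℝ) * (2 * N - (2 * m + 1)) := by rw [c2]; ring
      _ = ((((2 * m - 1).doubleFactorial : ℕ) : ℝ) * ((2 * N).choose (2 * m) : ℝ)) * (2 * N - 2 * m) * (2 * N - (2 * m + 1)) := by rw [c1]; ring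
      _ = 2 * ((N.choose m : ℝ) * (N - m)) * P * (2 * N - (2 * m + 1)) := by rw [ih]; ring
      _ = _ := by rw [← c3]; ring

theorem prG_prB (n m : ℕ) (D : Fin n → ℕ) (hn : 1 ≤ n) (hs : ∑ i, D i = 2 * m) (hm : m ≤ n.choose 2)
    (hD : ∀ i, D i ≤ n - 1) (X : ℝ)
    (hX : (gcount n D : ℝ) * ∏ i, ((D i).factorial : ℝ) = (((2 * m - 1).doubleFactorial : ℕ) : ℝ) * X) :
    prG n m D * (∏ i, ((n - 1).descFactorial (D i) : ℝ)) =
      prB n m D * (∏ k ∈ range m, ((n:ℝ) * (n - 1) - (2 * k + 1))) * X := by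
  rw [prG_eq n m D hs, prB, if_pos hs]
  have h2 : 2 * n.choose 2 = n * (n - 1) := by
    rw [Nat.choose_two_right]
    exact Nat.mul_div_cancel' (Nat.even_mul_pred_self n).two_dvd
  have h2r : (2 * (n.choose 2 : ℕ) : ℝ) = n * (n - 1) := by
    have : ((2 * n.choose 2 : ℕ) : ℝ) = ((n * (n - 1) : ℕ) : ℝ) := by rw [h2]
    push_cast [Nat.cast_sub hn] at this
    exact this
  have h3 := dfact_choose (n.choose 2) m hm
  rw [h2r, h2] at h3
  have h4 : ∀ i, ((n - 1).descFactorial (D i) : ℝ) = ((D i).factorial : ℝ) * ((n - 1).choose (D i) : ℝ) := by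
    intro i
    exact_mod_cast Nat.descFactorial_eq_factorial_mul_choose (n - 1) (D i)
  simp_rw [h4]
  rw [Finset.prod_mul_distrib]
  have p1 : (0:ℝ) < (((n.choose 2).choose m : ℕ) : ℝ) := by exact_mod_cast Nat.choose_pos hm
  have p2 : (0:ℝ) < ((n * (n - 1)).choose (2 * m) : ℝ) := by
    exact_mod_cast Nat.choose_pos (by omega)
  field_simp
  set P := ∏ k ∈ range m, ((n:ℝ) * (n - 1) - (2 * k + 1))
  set Q := ∏ i, ((n - 1).choose (D i) : ℝ)
  calc _ = ((gcount n D : ℝ) * ∏ i, ((D i).factorial : ℝ)) * Q * ((n * (n - 1)).choose (2 * m) : ℝ) := by ring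
    _ = ((((2 * m - 1).doubleFactorial : ℕ) : ℝ) * ((n * (n - 1)).choose (2 * m) : ℝ)) * X * Q := by rw [hX]; ring
    _ = _ := by rw [h3]; ring

end transfer

section analytic

lemma prod_est {ι : Type*} (s : Finset ι) (p : ι → ℝ) (h0 : ∀ i ∈ s, 0 ≤ p i) (h1 : ∀ i ∈ s, p i ≤ 1 / 2) :
    ∃ r, |r| ≤ ∑ i ∈ s, p i ^ 2 ∧ ∏ i ∈ s, (1 - p i) = Real.exp (-(∑ i ∈ s, p i) + r) := by
  classical
  induction s using Finset.induction_on with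
  | empty => exact ⟨0, by simp, by simp⟩
  | insert a s ha ih =>
    obtain ⟨r, hr, hre⟩ := ih (fun i hi => h0 i (Finset.mem_insert_of_mem hi))
      (fun i hi => h1 i (Finset.mem_insert_of_mem hi))
    obtain ⟨t, ht, hte⟩ := log_est (p a) (h0 a (Finset.mem_insert_self _ _)) (h1 a (Finset.mem_insert_self _ _))
    refine ⟨t + r, ?_, ?_⟩
    · rw [Finset.sum_insert ha]
      exact (abs_add_le _ _).trans (add_le_add ht hr)
    · rw [Finset.prod_insert ha, Finset.sum_insert ha, hre, hte, ← Real.exp_add]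
      congr 1; ring

lemma sum_odd (m : ℕ) : ∑ k ∈ range m, (2 * (k:ℝ) + 1) = (m:ℝ) ^ 2 := by
  induction m with
  | zero => simp
  | succ m ih => rw [Finset.sum_range_succ, ih]; push_cast; ring

lemma sum_id (k : ℕ) : ∑ j ∈ range k, (j:ℝ) = (k:ℝ) * (k - 1) / 2 := by
  induction k with
  | zero => simp
  | succ m ih => rw [Finset.sum_range_succ, ih]; push_cast; ring

lemma P_est (m : ℕ) (A : ℝ) (hA : 0 < A) (hm : 4 * (m:ℝ) ≤ A) :
    ∃ r, |r| ≤ m * (2 * m / A) ^ 2 ∧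
      ∏ k ∈ range m, (A - (2 * (k:ℝ) + 1)) = A ^ m * Real.exp (-((m:ℝ) ^ 2 / A) + r) := by
  have hb : ∀ k ∈ range m, 2 * (k:ℝ) + 1 ≤ 2 * m := by
    intro k hk
    have : k + 1 ≤ m := by simpa using hk
    have : (k:ℝ) + 1 ≤ m := by exact_mod_cast this
    linarith
  obtain ⟨r, hr, hre⟩ := prod_est (range m) (fun k => (2 * (k:ℝ) + 1) / A)
    (fun k _ => by positivity)
    (fun k hk => by
      have := hb k hk
      rw [div_le_iff₀ hA]; linarith)
  refine ⟨r, ?_, ?_⟩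
  · refine hr.trans ?_
    calc ∑ k ∈ range m, ((2 * (k:ℝ) + 1) / A) ^ 2 ≤ ∑ k ∈ range m, (2 * m / A) ^ 2 := by
          apply Finset.sum_le_sum
          intro k hk
          have := hb k hk
          gcongr
      _ = _ := by simp
  · rw [← Finset.sum_div, sum_odd] at hre
    rw [← hre]
    have : ∏ k ∈ range m, (A - (2 * (k:ℝ) + 1)) = ∏ k ∈ range m, (A * (1 - (2 * (k:ℝ) + 1) / A)) := by
      apply Finset.prod_congr rfl
      intro k _
      field_simp
    rw [this, Finset.prod_mul_distrib]; simp

lemma desc_est (w k Δ : ℕ) (hk : k ≤ Δ) (hw : 2 * Δ ≤ w) (hw0 : 0 < w) :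
    ∃ r, |r| ≤ k * ((Δ:ℝ) / w) ^ 2 ∧
      (w.descFactorial k : ℝ) = (w:ℝ) ^ k * Real.exp (-((k:ℝ) * (k - 1) / (2 * w)) + r) := by
  have hw0' : (0:ℝ) < w := by exact_mod_cast hw0
  have hb : ∀ j ∈ range k, (j:ℝ) ≤ Δ := by
    intro j hj
    have : j < k := by simpa using hj
    exact_mod_cast (by omega : j ≤ Δ)
  have hwr : 2 * (Δ:ℝ) ≤ w := by exact_mod_cast hw
  obtain ⟨r, hr, hre⟩ := prod_est (range k) (fun j => (j:ℝ) / w)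
    (fun j _ => by positivity)
    (fun j hj => by
      have := hb j hj
      rw [div_le_iff₀ hw0']; linarith)
  refine ⟨r, ?_, ?_⟩
  · refine hr.trans ?_
    calc ∑ j ∈ range k, ((j:ℝ) / w) ^ 2 ≤ ∑ j ∈ range k, ((Δ:ℝ) / w) ^ 2 := by
          apply Finset.sum_le_sum
          intro j hj
          have := hb j hj
          gcongr
      _ = _ := by simp
  · rw [← Finset.sum_div, sum_id] at hre
    rw [show (k:ℝ) * (k - 1) / (2 * w) = (k:ℝ) * (k - 1) / 2 / w by field_simp, ← hre]
    rw [Nat.descFactorial_eq_prod_range]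
    push_cast
    have : ∏ j ∈ range k, (((w - j : ℕ)) : ℝ) = ∏ j ∈ range k, ((w:ℝ) * (1 - (j:ℝ) / w)) := by
      apply Finset.prod_congr rfl
      intro j hj
      have : j < k := by simpa using hj
      rw [Nat.cast_sub (by omega)]
      field_simp
    rw [this, Finset.prod_mul_distrib]; simp

lemma Q_est (n m : ℕ) (D : Fin n → ℕ) (Δ w : ℕ) (hD : ∀ i, D i ≤ Δ) (hs : ∑ i, D i = 2 * m)
    (hw : 2 * Δ ≤ w) (hw0 : 0 < w) :
    ∃ r, |r| ≤ 2 * m * ((Δ:ℝ) / w) ^ 2 ∧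
      ∏ i, (w.descFactorial (D i) : ℝ) =
        (w:ℝ) ^ (2 * m) * Real.exp (-((∑ i, (D i : ℝ) * (D i - 1)) / (2 * w)) + r) := by
  choose r hr hre using fun i => desc_est w (D i) Δ (hD i) hw hw0
  refine ⟨∑ i, r i, ?_, ?_⟩
  · calc |∑ i, r i| ≤ ∑ i, |r i| := Finset.abs_sum_le_sum_abs _ _
      _ ≤ ∑ i, (D i : ℝ) * ((Δ:ℝ) / w) ^ 2 := Finset.sum_le_sum fun i _ => hr i
      _ = _ := by
        rw [← Finset.sum_mul]
        congr 1
        exact_mod_cast hs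
  · rw [Finset.prod_congr rfl fun i _ => hre i, Finset.prod_mul_distrib, Finset.prod_pow_eq_pow_sum, hs,
      ← Real.exp_sum, Finset.sum_add_distrib, Finset.sum_neg_distrib, Finset.sum_div]

lemma w_est (n m : ℕ) (hn : 2 ≤ n) :
    ∃ r, |r| ≤ m * (1 / (n:ℝ)) ^ 2 ∧
      ((n:ℝ) - 1) ^ m = (n:ℝ) ^ m * Real.exp (-((m:ℝ) / n) + r) := by
  have hn' : (2:ℝ) ≤ n := by exact_mod_cast hn
  obtain ⟨r, hr, hre⟩ := prod_est (range m) (fun _ => 1 / (n:ℝ)) (fun _ _ => by positivity)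
    (fun _ _ => by rw [div_le_div_iff₀ (by linarith) (by norm_num)]; linarith)
  simp only [Finset.sum_const, Finset.card_range, Finset.prod_const, nsmul_eq_mul] at hr hre
  refine ⟨r, hr, ?_⟩
  rw [show (m:ℝ) / n = m * (1 / n) by ring, ← hre, ← mul_pow]
  congr 1; field_simp

theorem PQ_est (n m : ℕ) (D : Fin n → ℕ) (Δ : ℕ) (hD : ∀ i, D i ≤ Δ) (hs : ∑ i, D i = 2 * m)
    (hw : 2 * Δ ≤ n - 1) (hn : 2 ≤ n) (hm : 4 * (m:ℝ) ≤ n * (n - 1)) :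
    ∃ r, |r| ≤ m * (2 * m / ((n:ℝ) * (n - 1))) ^ 2 + 2 * m * ((Δ:ℝ) / (n - 1)) ^ 2 + m * (1 / (n:ℝ)) ^ 2 ∧
      ∏ k ∈ range m, ((n:ℝ) * (n - 1) - (2 * k + 1)) = (∏ i, ((n - 1).descFactorial (D i) : ℝ)) *
        Real.exp ((∑ i, (D i : ℝ) * (D i - 1)) / (2 * (n - 1)) + (m:ℝ) / n - (m:ℝ) ^ 2 / (n * (n - 1)) + r) := by
  have hn' : (2:ℝ) ≤ n := by exact_mod_cast hn
  have hc : ((n - 1 : ℕ) : ℝ) = (n:ℝ) - 1 := by rw [Nat.cast_sub (by omega)]; simp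
  obtain ⟨r1, h1, e1⟩ := P_est m ((n:ℝ) * (n - 1)) (mul_pos (by linarith) (by linarith)) hm
  obtain ⟨r2, h2, e2⟩ := Q_est n m D Δ (n - 1) hD hs hw (by omega)
  obtain ⟨r3, h3, e3⟩ := w_est n m hn
  rw [hc] at h2 e2
  refine ⟨r1 - r2 - r3, ?_, ?_⟩
  · calc |r1 - r2 - r3| ≤ |r1 - r2| + |r3| := abs_sub _ _
      _ ≤ |r1| + |r2| + |r3| := by gcongr; exact abs_sub _ _
      _ ≤ _ := by gcongr
  · rw [e1, e2, two_mul, pow_add, mul_pow]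
    set a := ((n:ℝ) - 1) ^ m
    rw [e3]
    set T := (∑ i, (D i : ℝ) * (D i - 1)) / (2 * ((n:ℝ) - 1))
    set b := (m:ℝ) ^ 2 / (n * (n - 1))
    have key : Real.exp (-b + r1) = Real.exp (-((m:ℝ) / n) + r3) * Real.exp (-T + r2) *
        Real.exp (T + (m:ℝ) / n - b + (r1 - r2 - r3)) := by
      rw [← Real.exp_add, ← Real.exp_add]; congr 1; ring
    rw [key]; ring

end analytic

section final

set_option maxHeartbeats 1000000 in
lemma num_final (n d σ Δ m r R : ℝ) (hm : m = n * d / 2) (hΔ : 1 ≤ Δ) (hd : 0 < d) (hdΔ : d ≤ Δ)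
    (hσ : 0 ≤ σ) (hσΔ : σ ≤ Δ) (hn : 1000 * Δ ^ 4 ≤ n)
    (hr : |r| ≤ 45 * Δ ^ 4 / (2 * m))
    (hR : |R| ≤ m * (2 * m / (n * (n - 1))) ^ 2 + 2 * m * (Δ / (n - 1)) ^ 2 + m * (1 / n) ^ 2)
    (T : ℝ) (hT : T = σ * n * d + n * d ^ 2 - n * d) :
    |(T / (2 * (n - 1)) + m / n - m ^ 2 / (n * (n - 1)) + R) +
      (-(T / (2 * (2 * m)) + (T / (2 * (2 * m))) ^ 2) + r) -
      (1 / 4 - σ ^ 2 * n ^ 2 / (4 * (n - 1 - d) ^ 2))| ≤ 58 * (Δ ^ 6 / (n * d ^ 2)) := by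
  have hΔ0 : 0 < Δ := by linarith
  have h4 : Δ ≤ Δ ^ 4 := le_self_pow₀ hΔ (by norm_num)
  have h42 : Δ ^ 2 ≤ Δ ^ 4 := pow_le_pow_right₀ hΔ (by norm_num)
  have h43 : Δ ^ 3 ≤ Δ ^ 4 := pow_le_pow_right₀ hΔ (by norm_num)
  have hn0 : 0 < n := by linarith
  have hw0 : 0 < n - 1 := by linarith
  have hw2 : n ≤ 2 * (n - 1) := by linarith
  have hv : n / 2 ≤ n - 1 - d := by linarith
  have hv0 : 0 < n - 1 - d := by linarith
  subst hm
  have ident : (T / (2 * (n - 1)) + (n * d / 2) / n - (n * d / 2) ^ 2 / (n * (n - 1)) + R) +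
      (-(T / (2 * (2 * (n * d / 2))) + (T / (2 * (2 * (n * d / 2)))) ^ 2) + r) -
      (1 / 4 - σ ^ 2 * n ^ 2 / (4 * (n - 1 - d) ^ 2)) =
      R + r + (d ^ 2 / 4 + σ * d / 2 - d / 2) / (n - 1) +
        (σ ^ 2 / 4) * ((n ^ 2 - (n - 1 - d) ^ 2) / (n - 1 - d) ^ 2) := by
    have e1 : T / (2 * (2 * (n * d / 2))) = σ / 2 + d / 2 - 1 / 2 := by
      rw [hT]; field_simp
    have e2 : T / (2 * (n - 1)) + (n * d / 2) / n - (n * d / 2) ^ 2 / (n * (n - 1)) =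
        d ^ 2 / 4 + σ * d / 2 + (d ^ 2 / 4 + σ * d / 2 - d / 2) / (n - 1) := by
      rw [hT]; field_simp; ring
    have e3 : σ ^ 2 * n ^ 2 / (4 * (n - 1 - d) ^ 2) = σ ^ 2 / 4 +
        (σ ^ 2 / 4) * ((n ^ 2 - (n - 1 - d) ^ 2) / (n - 1 - d) ^ 2) := by
      field_simp; ring
    rw [e1, e2, e3]; ring
  rw [ident]
  set q := Δ ^ 6 / (n * d ^ 2) with hq
  have hq1 : Δ ^ 4 / n ≤ q := by
    rw [hq, div_le_div_iff₀ hn0 (by positivity)]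
    have : d ^ 2 ≤ Δ ^ 2 := pow_le_pow_left₀ hd.le hdΔ 2
    calc Δ ^ 4 * (n * d ^ 2) ≤ Δ ^ 4 * (n * Δ ^ 2) := by gcongr
      _ = _ := by ring
  have hq2 : Δ ^ 4 / (n * d) ≤ q := by
    rw [hq, div_le_div_iff₀ (by positivity) (by positivity)]
    have : d ≤ Δ ^ 2 := by nlinarith
    calc Δ ^ 4 * (n * d ^ 2) = Δ ^ 4 * (n * d * d) := by ring
      _ ≤ Δ ^ 4 * (n * d * Δ ^ 2) := by gcongr
      _ = _ := by ring
  have hinv : 1 / (n - 1) ≤ 2 / n := by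
    rw [div_le_div_iff₀ hw0 hn0]; linarith
  have b1 : |r| ≤ 45 * q := by
    refine hr.trans ?_
    calc 45 * Δ ^ 4 / (2 * (n * d / 2)) = 45 * (Δ ^ 4 / (n * d)) := by field_simp
      _ ≤ _ := by linarith
  have hd3 : d ^ 3 ≤ Δ ^ 4 := (pow_le_pow_left₀ hd.le hdΔ 3).trans h43
  have hdd : d * Δ ^ 2 ≤ Δ ^ 4 := by
    calc d * Δ ^ 2 ≤ Δ * Δ ^ 2 := by gcongr
      _ = Δ ^ 3 := by ring
      _ ≤ _ := h43
  have hinv2 : n * (1 / (n - 1)) ^ 2 ≤ 4 / n := by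
    calc n * (1 / (n - 1)) ^ 2 ≤ n * (2 / n) ^ 2 := by gcongr
      _ = _ := by field_simp; norm_num
  have b2 : |R| ≤ 7 * q := by
    refine hR.trans ?_
    have c1 : n * d / 2 * (2 * (n * d / 2) / (n * (n - 1))) ^ 2 ≤ 2 * (Δ ^ 4 / n) := by
      calc n * d / 2 * (2 * (n * d / 2) / (n * (n - 1))) ^ 2 = (d ^ 3 / 2) * (n * (1 / (n - 1)) ^ 2) := by
            field_simp
        _ ≤ (Δ ^ 4 / 2) * (4 / n) := by gcongr
        _ = _ := by ring
    have c2 : 2 * (n * d / 2) * (Δ / (n - 1)) ^ 2 ≤ 4 * (Δ ^ 4 / n) := by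
      calc 2 * (n * d / 2) * (Δ / (n - 1)) ^ 2 = (d * Δ ^ 2) * (n * (1 / (n - 1)) ^ 2) := by
            field_simp
        _ ≤ (Δ ^ 4) * (4 / n) := by gcongr
        _ = _ := by ring
    have c3 : n * d / 2 * (1 / n) ^ 2 ≤ Δ ^ 4 / n := by
      calc n * d / 2 * (1 / n) ^ 2 = (d / 2) / n := by field_simp
        _ ≤ _ := by gcongr; linarith
    linarith
  have b3 : |(d ^ 2 / 4 + σ * d / 2 - d / 2) / (n - 1)| ≤ 2 * q := by
    have c1 : |d ^ 2 / 4 + σ * d / 2 - d / 2| ≤ Δ ^ 4 := by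
      have a1 : σ * d ≤ Δ ^ 2 := by nlinarith
      have a2 : d ^ 2 ≤ Δ ^ 2 := pow_le_pow_left₀ hd.le hdΔ 2
      have a3 : 0 ≤ σ * d := by positivity
      have a4 : 0 ≤ d ^ 2 := by positivity
      rw [abs_le]; constructor <;> linarith
    rw [abs_div, abs_of_pos hw0]
    calc _ = |d ^ 2 / 4 + σ * d / 2 - d / 2| * (1 / (n - 1)) := by ring
      _ ≤ Δ ^ 4 * (2 / n) := by gcongr
      _ = 2 * (Δ ^ 4 / n) := by ring
      _ ≤ _ := by linarith
  have b4 : |(σ ^ 2 / 4) * ((n ^ 2 - (n - 1 - d) ^ 2) / (n - 1 - d) ^ 2)| ≤ 4 * q := by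
    have cf : n ^ 2 - (n - 1 - d) ^ 2 = (1 + d) * (2 * n - 1 - d) := by ring
    have c0 : 0 ≤ n ^ 2 - (n - 1 - d) ^ 2 := by
      rw [cf]; exact mul_nonneg (by linarith) (by linarith)
    rw [abs_of_nonneg (by positivity)]
    have c1 : n ^ 2 - (n - 1 - d) ^ 2 ≤ 4 * Δ * n := by
      rw [cf]
      calc (1 + d) * (2 * n - 1 - d) ≤ (2 * Δ) * (2 * n) :=
            mul_le_mul (by linarith) (by linarith) (by linarith) (by linarith)
        _ = _ := by ring
    have c2 : (n / 2) ^ 2 ≤ (n - 1 - d) ^ 2 := pow_le_pow_left₀ (by positivity) hv 2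
    calc (σ ^ 2 / 4) * ((n ^ 2 - (n - 1 - d) ^ 2) / (n - 1 - d) ^ 2)
        ≤ (Δ ^ 2 / 4) * ((4 * Δ * n) / (n / 2) ^ 2) := by gcongr
      _ = 4 * (Δ ^ 3 / n) := by field_simp; ring
      _ ≤ 4 * (Δ ^ 4 / n) := by gcongr
      _ ≤ _ := by linarith
  calc _ ≤ |R| + |r| + |(d ^ 2 / 4 + σ * d / 2 - d / 2) / (n - 1)| +
        |(σ ^ 2 / 4) * ((n ^ 2 - (n - 1 - d) ^ 2) / (n - 1 - d) ^ 2)| := by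
        refine (abs_add_le _ _).trans ?_
        gcongr
        refine (abs_add_le _ _).trans ?_
        gcongr
        exact abs_add_le _ _
    _ ≤ _ := by linarith

theorem main_ratio (n m : ℕ) (D : Fin n → ℕ) (hs : ∑ i, D i = 2 * m) (d : ℝ) (hd : d = 2 * (m:ℝ) / n)
    (Δ : ℕ) (hD : ∀ i, D i ≤ Δ) (hpos : 0 < (n:ℝ) * d ^ 2) (hη : 1000 * (Δ:ℝ) ^ 6 ≤ n * d ^ 2) :
    ∃ t : ℝ, |t| ≤ 58 * ((Δ:ℝ) ^ 6 / (n * d ^ 2)) ∧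
      prG n m D = prB n m D * Real.exp (1 / 4 - ((∑ i, ((D i : ℝ) - d) ^ 2) / ((n:ℝ) - 1) ^ 2) ^ 2 /
        (4 * (d / ((n:ℝ) - 1)) ^ 2 * (1 - d / ((n:ℝ) - 1)) ^ 2) + t) := by
  have hn0 : (0:ℝ) < n := by
    rcases Nat.eq_zero_or_pos n with h | h
    · subst h; simp at hpos
    · exact_mod_cast h
  have hnd : (n:ℝ) * d = 2 * m := by rw [hd]; field_simp
  have hd0 : 0 < d := by
    have : 0 ≤ d := by rw [hd]; positivity
    rcases this.eq_or_lt with h | h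
    · rw [← h] at hpos; simp at hpos
    · exact h
  have hm0 : (0:ℝ) < m := by nlinarith [mul_pos hn0 hd0]
  have hsR : ∑ i, (D i : ℝ) = 2 * m := by exact_mod_cast hs
  have hΔ1 : 1 ≤ Δ := by
    by_contra h
    have : ∑ i, D i = 0 := Finset.sum_eq_zero fun i _ => by have := hD i; omega
    rw [hs] at this
    have : m = 0 := by omega
    rw [this] at hm0; simp at hm0
  have hΔ : (1:ℝ) ≤ Δ := by exact_mod_cast hΔ1
  have hDR : ∀ i, (D i : ℝ) ≤ Δ := fun i => by exact_mod_cast hD i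
  have hdΔ : d ≤ Δ := by
    have : ∑ i, (D i : ℝ) ≤ ∑ i : Fin n, (Δ:ℝ) := Finset.sum_le_sum fun i _ => hDR i
    rw [hsR, ← hnd] at this
    simp at this
    exact le_of_mul_le_mul_left this hn0
  have hΔ2 : d ^ 2 ≤ (Δ:ℝ) ^ 2 := pow_le_pow_left₀ hd0.le hdΔ 2
  have hΔpos : (0:ℝ) < Δ := by linarith
  have hn : 1000 * (Δ:ℝ) ^ 4 ≤ n := by
    have h1 : 1000 * (Δ:ℝ) ^ 6 ≤ n * (Δ:ℝ) ^ 2 := hη.trans (by gcongr)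
    have h2 : (1000 * (Δ:ℝ) ^ 4) * (Δ:ℝ) ^ 2 ≤ n * (Δ:ℝ) ^ 2 := by
      calc _ = 1000 * (Δ:ℝ) ^ 6 := by ring
        _ ≤ _ := h1
    exact le_of_mul_le_mul_right h2 (by positivity)
  have hM : 100 * (Δ:ℝ) ^ 2 ≤ 2 * m := by
    rw [← hnd]
    have h1 : 1000 * (Δ:ℝ) ^ 6 ≤ n * d * Δ := by
      calc _ ≤ (n:ℝ) * d ^ 2 := hη
        _ = n * d * d := by ring
        _ ≤ _ := by gcongr
    have h2 : (1000 * (Δ:ℝ) ^ 5) * Δ ≤ (n * d) * Δ := by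
      calc _ = 1000 * (Δ:ℝ) ^ 6 := by ring
        _ ≤ _ := h1
    have h3 := le_of_mul_le_mul_right h2 hΔpos
    have h4 : (Δ:ℝ) ^ 2 ≤ (Δ:ℝ) ^ 5 := pow_le_pow_right₀ hΔ (by norm_num)
    have : 0 ≤ (Δ:ℝ) ^ 2 := by positivity
    linarith
  have hΔ4 : (Δ:ℝ) ≤ (Δ:ℝ) ^ 4 := le_self_pow₀ hΔ (by norm_num)
  have hnN : 2 * Δ + 2 ≤ n := by
    have : 2 * (Δ:ℝ) + 2 ≤ n := by linarith
    exact_mod_cast this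
  have hm4 : 4 * (m:ℝ) ≤ n * (n - 1) := by
    have : 4 * (m:ℝ) = n * (2 * d) := by linarith
    rw [this]
    apply mul_le_mul_of_nonneg_left _ hn0.le
    linarith
  have hmc : m ≤ n.choose 2 := by
    have h2r : ((n.choose 2 : ℕ) : ℝ) = n * (n - 1) / 2 := Nat.cast_choose_two ℝ n
    have : (m:ℝ) ≤ (n.choose 2 : ℕ) := by rw [h2r]; linarith
    exact_mod_cast this
  obtain ⟨r, hr, hre⟩ := gcount_main n m D Δ hΔ1 hD hs hM
  have hB := prG_prB n m D (by omega) hs hmc (fun i => by have := hD i; omega) _ hre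
  obtain ⟨R, hR, hRe⟩ := PQ_est n m D Δ hD hs (by omega) (by omega) hm4
  set T := ∑ i, (D i : ℝ) * (D i - 1) with hTdef
  set S := ∑ i, ((D i : ℝ) - d) ^ 2 with hSdef
  have hS2 : S = ∑ i, (D i : ℝ) ^ 2 - n * d ^ 2 := by
    have : ∀ i, ((D i : ℝ) - d) ^ 2 = (D i : ℝ) ^ 2 - 2 * d * D i + d ^ 2 := fun i => by ring
    simp_rw [hSdef, this, Finset.sum_add_distrib, Finset.sum_sub_distrib, ← Finset.mul_sum, hsR]
    simp only [Finset.sum_const, Finset.card_univ, Fintype.card_fin, nsmul_eq_mul]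
    rw [← hnd]; ring
  have hT2 : T = ∑ i, (D i : ℝ) ^ 2 - n * d := by
    have : ∀ i, (D i : ℝ) * (D i - 1) = (D i : ℝ) ^ 2 - D i := fun i => by ring
    simp_rw [hTdef, this, Finset.sum_sub_distrib, hsR, hnd]
  have hS0 : 0 ≤ S := Finset.sum_nonneg fun i _ => sq_nonneg _
  have hSle : S ≤ Δ * (n * d) := by
    rw [hS2, hnd, ← hsR, Finset.mul_sum]
    have : ∑ i, (D i : ℝ) ^ 2 ≤ ∑ i, (Δ:ℝ) * D i := by
      apply Finset.sum_le_sum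
      intro i _
      rw [sq]
      exact mul_le_mul_of_nonneg_right (hDR i) (by positivity)
    linarith
  set σ := S / (n * d) with hσdef
  have hσS : S = σ * n * d := by rw [hσdef]; field_simp
  have hσ0 : 0 ≤ σ := by positivity
  have hσΔ : σ ≤ Δ := by rw [hσdef, div_le_iff₀ (by positivity)]; exact hSle
  have hfin := num_final n d σ Δ m r R (by linarith) hΔ hd0 hdΔ hσ0 hσΔ hn hr hR T
    (by rw [← hσS, hT2, hS2]; ring)
  have hw0 : (0:ℝ) < n - 1 := by linarith
  have hv0 : (0:ℝ) < n - 1 - d := by linarith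
  have hγ : (S / ((n:ℝ) - 1) ^ 2) ^ 2 / (4 * (d / ((n:ℝ) - 1)) ^ 2 * (1 - d / ((n:ℝ) - 1)) ^ 2) =
      σ ^ 2 * n ^ 2 / (4 * (n - 1 - d) ^ 2) := by
    have : 1 - d / ((n:ℝ) - 1) = (n - 1 - d) / (n - 1) := by field_simp
    rw [this, hσS]
    field_simp
  refine ⟨_, hfin, ?_⟩
  rw [hγ]
  have hQ : 0 < ∏ i, ((n - 1).descFactorial (D i) : ℝ) := by
    apply Finset.prod_pos
    intro i _
    have : 0 < (n - 1).descFactorial (D i) := Nat.pos_of_ne_zero (by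
      rw [Ne, Nat.descFactorial_eq_zero_iff_lt]; have := hD i; omega)
    exact_mod_cast this
  rw [add_sub_cancel, Real.exp_add]
  apply mul_right_cancel₀ hQ.ne'
  rw [hB, hRe]; ring

lemma final_wrap (ε : ℝ) (n m : ℕ) (d : ℝ) (hd : d = 2 * (m:ℝ) / n) (hpos : 0 < (n:ℝ) * d ^ 2)
    (D : Fin n → ℕ) (hs : ∑ i, D i = 2 * m)
    (h : (((Finset.univ.sup D : ℕ) : ℝ) ^ 6 + (n : ℝ) ^ ε ≤ 1 / 1000 * (n : ℝ) * d ^ 2)) :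
    ∃ E : ℝ, |E| ≤ 116 * ((((Finset.univ.sup D : ℕ) : ℝ) ^ 6 + (n : ℝ) ^ ε) / ((n : ℝ) * d ^ 2) +
                (n : ℝ) ^ (ε - 1 / 2)) ∧
      prG n m D = prB n m D * Real.exp (1 / 4 - ((∑ i, ((D i : ℝ) - d) ^ 2) / ((n:ℝ) - 1) ^ 2) ^ 2 /
        (4 * (d / ((n:ℝ) - 1)) ^ 2 * (1 - d / ((n:ℝ) - 1)) ^ 2)) * (1 + E) := by
  have hne : 0 ≤ (n:ℝ) ^ ε := by positivity
  have hne2 : 0 ≤ (n:ℝ) ^ (ε - 1 / 2) := by positivity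
  obtain ⟨t, ht, hte⟩ := main_ratio n m D hs d hd (Finset.univ.sup D)
    (fun i => Finset.le_sup (mem_univ i)) hpos (by linarith)
  set Δ : ℝ := ((Finset.univ.sup D : ℕ) : ℝ)
  have hq : Δ ^ 6 / (n * d ^ 2) ≤ 1 / 1000 := by rw [div_le_iff₀ hpos]; linarith
  have ht1 : |t| ≤ 1 := by linarith
  refine ⟨Real.exp t - 1, ?_, ?_⟩
  · have h1 := Real.abs_exp_sub_one_le ht1
    have h2 : (Δ ^ 6 + (n:ℝ) ^ ε) / (n * d ^ 2) = Δ ^ 6 / (n * d ^ 2) + (n:ℝ) ^ ε / (n * d ^ 2) := add_div _ _ _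
    have h3 : 0 ≤ (n:ℝ) ^ ε / (n * d ^ 2) := by positivity
    rw [h2]
    linarith
  · rw [hte, Real.exp_add]; ring

end final
theorem sparse_enumeration :
    ∀ ε : ℝ, 0 < ε →
      ∃ A η : ℝ, 0 < A ∧ 0 < η ∧
        ∃ n₀ : ℕ, ∀ n : ℕ, n₀ ≤ n → ∀ m : ℕ,
          let d : ℝ := 2 * (m : ℝ) / (n : ℝ)
          0 < (n : ℝ) * d ^ 2 →
          ∀ D : Fin n → ℕ, (∑ i, D i) = 2 * m →
            (((Finset.univ.sup D : ℕ) : ℝ) ^ 6 + (n : ℝ) ^ ε ≤ η * (n : ℝ) * d ^ 2) →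
            let μ : ℝ := d / ((n : ℝ) - 1)
            let γ₂ : ℝ := (∑ i, ((D i : ℝ) - d) ^ 2) / ((n : ℝ) - 1) ^ 2
            ∃ E : ℝ,
              |E| ≤ A * ((((Finset.univ.sup D : ℕ) : ℝ) ^ 6 + (n : ℝ) ^ ε) / ((n : ℝ) * d ^ 2) +
                (n : ℝ) ^ (ε - 1 / 2)) ∧
              prG n m D = prB n m D *
                Real.exp (1 / 4 - γ₂ ^ 2 / (4 * μ ^ 2 * (1 - μ) ^ 2)) * (1 + E) := by
  intro ε _
  refine ⟨116, 1 / 1000, by norm_num, by norm_num, 0, ?_⟩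
  intro n _ m d hpos D hs h μ γ₂
  exact final_wrap ε n m d rfl hpos D hs h
end
end
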